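/- arXiv:2510.13469 — 2 statements merged into one kernel-verified Lean document; each statement's English description precedes it below -/
import Mathlib

section
/- Assume n = 3 and σ ≡ 1 (mod 2). Then for every k ≥ 2, every k×k matrix C with entries in the maximal order 𝔪 = I(λ) is a sum of squares of k×k matrices with entries in 𝔪. -/
/-!
Matrices over the maximal order `I(λ)` in a cyclic division algebra of degree `n = 3`
over `ℚ` are sums of squares, provided `σ ≡ 1 (mod 2)`.
-/

set_option synthInstance.maxHeartbeats 1000000

noncomputable section

/-- `ζ = e^{2πi/p}`, a primitive `p`-th root of unity in `ℂ`. -/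
def zetaC (p : ℕ) : ℂ := Complex.exp (2 * Real.pi * Complex.I / p)

/-- The Gaussian period `η_s = ∑_{r=0}^{h-1} ζ^{g^{nr+s}}`. -/
def gaussPeriod (n p h g : ℕ) (s : ℕ) : ℂ :=
  ∑ r ∈ Finset.range h, zetaC p ^ (g ^ (n * r + s))

/-- `Z = ℚ(η)`, the subfield of `ℂ` generated over `ℚ` by the Gaussian period `η = η₀`. -/
def Zf (n p h g : ℕ) : IntermediateField ℚ ℂ :=
  IntermediateField.adjoin ℚ {gaussPeriod n p h g 0}

/-- `η` as an element of `Z = ℚ(η)`. -/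
def etaZ (n p h g : ℕ) : Zf n p h g :=
  ⟨gaussPeriod n p h g 0, IntermediateField.subset_adjoin ℚ _ rfl⟩

/-- `D(z) = diag(z, S(z), …, S^{n-1}(z))` in `M_n(Z)`. -/
def Dm (n p h g : ℕ) (S : Zf n p h g ≃ₐ[ℚ] Zf n p h g) (z : Zf n p h g) :
    Matrix (Fin n) (Fin n) (Zf n p h g) :=
  Matrix.diagonal fun i => (S ^ (i : ℕ)) z

/-- The matrix `U` with `U_{i+1,i} = 1`, `U_{1,n} = σ`, and `0` elsewhere
(indices written `0`-based). -/
def Um (n p h g : ℕ) (σ : ℕ) : Matrix (Fin n) (Fin n) (Zf n p h g) :=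
  Matrix.of fun i j =>
    if (i : ℕ) = (j : ℕ) + 1 then 1
    else if (i : ℕ) = 0 ∧ (j : ℕ) = n - 1 then (σ : Zf n p h g) else 0

/-- `Y = (1/p)·(λ·I − U)·D(α)` with `α = β^{n-1}`. -/
def Ym (n p h g σ : ℕ) (lam : ℤ) (S : Zf n p h g ≃ₐ[ℚ] Zf n p h g) (β : Zf n p h g) :
    Matrix (Fin n) (Fin n) (Zf n p h g) :=
  ((p : Zf n p h g)⁻¹) •
    (((lam : Zf n p h g) • (1 : Matrix (Fin n) (Fin n) (Zf n p h g)) - Um n p h g σ) *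
      Dm n p h g S (β ^ (n - 1)))

/-- The maximal order `I(λ)`: all `ℤ`-linear combinations of the `n²` matrices
`Y^i · D(η_s)`, `0 ≤ i, s ≤ n-1`. -/
def Iorder (n p h g σ : ℕ) (lam : ℤ) (S : Zf n p h g ≃ₐ[ℚ] Zf n p h g) (β : Zf n p h g) :
    Set (Matrix (Fin n) (Fin n) (Zf n p h g)) :=
  { M | ∃ c : Fin n → Fin n → ℤ,
      M = ∑ i : Fin n, ∑ s : Fin n,
        c i s • (Ym n p h g σ lam S β ^ (i : ℕ) *
          Dm n p h g S ((S ^ (s : ℕ)) (etaZ n p h g))) }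

/-!
For an additive subgroup `R` of a ring with `1 ∈ R` and matrices of size at least two, squares of
matrices supported on two indices show that every off-diagonal matrix unit `a E_ij` with `a ∈ R` is
a sum of squares, and that the set `Q` of all `x` such that every `x E_ii` is a sum of squares
contains `± a ^ 2`, `2 a` and the commutators `b c - c b` of `R`. In particular membership in `Q`
of an element of `R` can be tested after multiplying it by an odd integer.

The prime `p` is odd, so powers of `p` may be cleared. After inverting `p` the lattices spanned by
the `Y ^ i D(z)` and by the `U ^ i D(z)`, with `z` in the ring `L` spanned by the Gaussian periods,
agree, because `β` divides `p` in `L`. Each `D(z)` lies in `Q` since Frobenius is surjective on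
`L / 2 L`. For `0 < j < n` the element `p U ^ j D(z)` is a sum of commutators of `U ^ j D(L)`
with `D(L)`, because `∑ s, (η_s - η_{s+j}) * conj η_s = p`.
-/

namespace CyclicOrder

/-! ### Sums of squares of matrices with entries in an additive subgroup -/

theorem single_mem_matrix {T ι : Type*} [AddGroup T] [DecidableEq ι] {R : AddSubgroup T} {a : T}
    (ha : a ∈ R) (i j : ι) : Matrix.single i j a ∈ R.matrix := by
  intro i' j'
  rw [Matrix.single_apply]
  split_ifs
  exacts [ha, R.zero_mem]

section SumSq

variable {T : Type*} [Ring T] (R : AddSubgroup T) (ι : Type*) [Fintype ι] [DecidableEq ι]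

/-- The sums of squares of `ι × ι` matrices with entries in `R`. As `R` need not be closed under
multiplication, these sums may have entries outside `R`. -/
def matrixSumSq : AddSubmonoid (Matrix ι ι T) :=
  AddSubmonoid.closure {M | ∃ A ∈ R.matrix, A ^ 2 = M}

/-- The elements `x` for which every diagonal matrix unit `x E_ii` is a sum of squares of matrices
with entries in `R`. -/
def diagSumSq : AddSubmonoid T where
  carrier := {x | ∀ i : ι, Matrix.single i i x ∈ matrixSumSq R ι}
  add_mem' ha hb i := by
    rw [Matrix.single_add]
    exact add_mem (ha i) (hb i)
  zero_mem' i := by simp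

variable {R ι} {a b c : T} {i j : ι}

theorem sq_mem_matrixSumSq {A : Matrix ι ι T} (hA : A ∈ R.matrix) : A ^ 2 ∈ matrixSumSq R ι :=
  AddSubmonoid.subset_closure ⟨A, hA, rfl⟩

theorem exists_eq_sum_sq_of_mem_matrixSumSq {C : Matrix ι ι T} (hC : C ∈ matrixSumSq R ι) :
    ∃ (m : ℕ) (A : Fin m → Matrix ι ι T), (∀ t i j, A t i j ∈ R) ∧ C = ∑ t, A t ^ 2 := by
  obtain ⟨l, hl, rfl⟩ := AddSubmonoid.exists_list_of_mem_closure hC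
  choose A hAR hAl using fun t : Fin l.length => hl _ (l.get_mem t)
  exact ⟨l.length, A, hAR, by simp [hAl, Fin.sum_univ_getElem]⟩

theorem sq_mem_diagSumSq (ha : a ∈ R) : a ^ 2 ∈ diagSumSq R ι := fun i => by
  simpa [sq] using sq_mem_matrixSumSq (single_mem_matrix ha i i)

theorem single_mul_add_single_mul_mem (hb : b ∈ R) (hc : c ∈ R) (hij : i ≠ j) :
    Matrix.single i i (b * c) + Matrix.single j j (c * b) ∈ matrixSumSq R ι := by
  have hA := add_mem (single_mem_matrix hb i j) (single_mem_matrix hc j i)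
  simpa [sq, add_mul, mul_add, hij, hij.symm, add_comm] using sq_mem_matrixSumSq hA

section Nontrivial

variable [Nontrivial ι]

theorem neg_sq_mem_diagSumSq (ha : a ∈ R) : -a ^ 2 ∈ diagSumSq R ι := fun i => by
  obtain ⟨j, hji⟩ := exists_ne i
  have hsum := add_mem (single_mul_add_single_mul_mem ha (neg_mem ha) hji.symm)
    (sq_mem_diagSumSq ha j)
  rwa [mul_neg, neg_mul, ← sq, add_assoc, ← Matrix.single_add, neg_add_cancel, Matrix.single_zero,
    add_zero] at hsum

variable (h1 : (1 : T) ∈ R)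
include h1

theorem add_self_mem_diagSumSq (ha : a ∈ R) : a + a ∈ diagSumSq R ι := by
  have hsum := add_mem (add_mem (sq_mem_diagSumSq (ι := ι) (add_mem ha h1))
    (neg_sq_mem_diagSumSq ha)) (neg_sq_mem_diagSumSq h1)
  convert hsum using 1
  noncomm_ring

theorem mul_sub_mul_mem_diagSumSq (hb : b ∈ R) (hc : c ∈ R) (hcb : c * b ∈ R) :
    b * c - c * b ∈ diagSumSq R ι := fun i => by
  obtain ⟨j, hji⟩ := exists_ne i
  have hsum := add_mem (single_mul_add_single_mul_mem hb hc hji.symm)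
    (single_mul_add_single_mul_mem (neg_mem hcb) h1 hji.symm)
  rwa [mul_one, one_mul, add_add_add_comm, ← Matrix.single_add, ← Matrix.single_add,
    add_neg_cancel, Matrix.single_zero, add_zero, ← sub_eq_add_neg] at hsum

theorem mem_diagSumSq_of_odd_nsmul_mem {m : ℕ} (hm : Odd m) (ha : a ∈ R)
    (hma : m • a ∈ diagSumSq R ι) : a ∈ diagSumSq R ι := by
  obtain ⟨k, rfl⟩ := hm
  have hsum := add_mem hma (add_self_mem_diagSumSq h1 (neg_mem (nsmul_mem ha k)))
  convert hsum using 1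
  rw [add_smul, mul_smul, two_smul, one_smul]
  abel

theorem single_mem_matrixSumSq_of_ne (ha : a ∈ R) (hij : i ≠ j) :
    Matrix.single i j a ∈ matrixSumSq R ι := by
  have hsq := sq_mem_matrixSumSq (add_mem (single_mem_matrix ha i j) (single_mem_matrix h1 j j))
  have hneg : Matrix.single j j (-1 : T) ∈ matrixSumSq R ι := by
    simpa using neg_sq_mem_diagSumSq h1 j
  convert add_mem hsq hneg using 1
  simp [sq, add_mul, mul_add, hij.symm, ← Matrix.single_neg]

theorem matrix_le_matrixSumSq (hR : R.toAddSubmonoid ≤ diagSumSq R ι) :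
    (R.matrix : AddSubgroup (Matrix ι ι T)).toAddSubmonoid ≤ matrixSumSq R ι := by
  intro C hC
  rw [Matrix.matrix_eq_sum_single C]
  refine sum_mem fun i _ => sum_mem fun j _ => ?_
  obtain rfl | hij := eq_or_ne i j
  · exact hR (hC i i) i
  · exact single_mem_matrixSumSq_of_ne h1 (hC i j) hij

end Nontrivial

end SumSq

/-! ### Inverting `p` -/

section Saturation

variable {M : Type*} [AddCommMonoid M] {p : ℕ} {A B : AddSubmonoid M} {x : M}

/-- The elements of `M` with a `p`-power multiple in `A`: up to `p`-torsion this is `A[1/p]`. -/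
def saturation (p : ℕ) (A : AddSubmonoid M) : AddSubmonoid M where
  carrier := {x | ∃ N : ℕ, p ^ N • x ∈ A}
  zero_mem' := ⟨0, by simp⟩
  add_mem' := by
    rintro x y ⟨N, hx⟩ ⟨K, hy⟩
    refine ⟨N + K, ?_⟩
    rw [smul_add, pow_add, mul_comm, mul_smul, mul_comm, mul_smul]
    exact add_mem (nsmul_mem hx _) (nsmul_mem hy _)

theorem le_saturation : A ≤ saturation p A := fun x hx => ⟨0, by simpa using hx⟩

theorem mem_saturation_of_pow_smul_mem {N : ℕ} (hx : p ^ N • x ∈ saturation p A) :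
    x ∈ saturation p A := by
  obtain ⟨K, hK⟩ := hx
  exact ⟨K + N, by rwa [pow_add, mul_smul]⟩

theorem saturation_le_saturation (hAB : A ≤ saturation p B) : saturation p A ≤ saturation p B :=
  fun _ ⟨_, hN⟩ => mem_saturation_of_pow_smul_mem (hAB hN)

theorem exists_pow_smul_mem_and_pow_smul_mem {y : M} (hx : x ∈ saturation p A)
    (hy : y ∈ saturation p A) : ∃ N : ℕ, p ^ N • x ∈ A ∧ p ^ N • y ∈ A := by
  obtain ⟨N, hN⟩ := hx
  obtain ⟨K, hK⟩ := hy
  refine ⟨N + K, ?_, ?_⟩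
  · rw [pow_add, mul_comm, mul_smul]
    exact nsmul_mem hN _
  · rw [pow_add, mul_smul]
    exact nsmul_mem hK _

end Saturation

section Commutator

variable {T : Type*} [Ring T] {R : AddSubgroup T} {ι : Type*} [Fintype ι] [DecidableEq ι]
  [Nontrivial ι] {p : ℕ} {b c : T}

theorem mul_sub_mul_mem_saturation_diagSumSq (h1 : 1 ∈ R) (hb : b ∈ R)
    (hc : c ∈ saturation p R.toAddSubmonoid) (hcb : c * b ∈ saturation p R.toAddSubmonoid) :
    b * c - c * b ∈ saturation p (diagSumSq R ι) := by
  obtain ⟨N, hcN, hcbN⟩ := exists_pow_smul_mem_and_pow_smul_mem hc hcb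
  refine ⟨N, ?_⟩
  rw [smul_sub, ← mul_smul_comm, ← smul_mul_assoc]
  exact mul_sub_mul_mem_diagSumSq h1 hb hcN (by rwa [smul_mul_assoc])

end Commutator

/-! ### Lattices spanned by powers -/

section PowerSpan

variable {L M : Type*} [CommRing L] [Ring M]

/-- The sums `∑ j < n, X ^ j * D (z j)` with coefficients `z j : L`. -/
def powerSpan (D : L →+* M) (X : M) (n : ℕ) : AddSubmonoid M :=
  AddSubmonoid.closure {x | ∃ j < n, ∃ z, X ^ j * D z = x}

variable {D : L →+* M} {X U Y : M} {n p : ℕ}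

theorem pow_mul_mem_powerSpan {j : ℕ} (hj : j < n) (z : L) : X ^ j * D z ∈ powerSpan D X n :=
  AddSubmonoid.subset_closure ⟨j, hj, z, rfl⟩

theorem powerSpan_le {A : AddSubmonoid M} (hA : ∀ j < n, ∀ z, X ^ j * D z ∈ A) :
    powerSpan D X n ≤ A :=
  AddSubmonoid.closure_le.2 (by rintro _ ⟨j, hj, z, rfl⟩; exact hA j hj z)

theorem powerSpan_mono {m : ℕ} (hmn : m ≤ n) : powerSpan D X m ≤ powerSpan D X n :=
  powerSpan_le fun _ hj => pow_mul_mem_powerSpan (hj.trans_le hmn)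

theorem mem_powerSpan_iff {x : M} :
    x ∈ powerSpan D X n ↔ ∃ z : Fin n → L, x = ∑ j : Fin n, X ^ (j : ℕ) * D (z j) := by
  refine ⟨fun hx => ?_, ?_⟩
  · induction hx using AddSubmonoid.closure_induction with
    | mem x hx =>
      obtain ⟨j, hj, z, rfl⟩ := hx
      refine ⟨Pi.single ⟨j, hj⟩ z, ?_⟩
      rw [Fintype.sum_eq_single ⟨j, hj⟩ fun i hi => by simp [hi], Pi.single_eq_same]
    | zero => exact ⟨0, by simp⟩
    | add x y _ _ hx hy =>
      obtain ⟨z, rfl⟩ := hx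
      obtain ⟨w, rfl⟩ := hy
      exact ⟨z + w, by simp [mul_add, Finset.sum_add_distrib]⟩
  · rintro ⟨z, rfl⟩
    exact sum_mem fun j _ => pow_mul_mem_powerSpan j.2 (z j)

theorem neg_mem_powerSpan {x : M} (hx : x ∈ powerSpan D X n) : -x ∈ powerSpan D X n := by
  obtain ⟨z, rfl⟩ := mem_powerSpan_iff.1 hx
  exact mem_powerSpan_iff.2 ⟨-z, by simp⟩

theorem mul_mem_saturation_of_mem_saturation_powerSpan {A : AddSubmonoid M} {a x : M}
    (hA : ∀ j < n, ∀ z, a * (X ^ j * D z) ∈ saturation p A)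
    (hx : x ∈ saturation p (powerSpan D X n)) : a * x ∈ saturation p A := by
  obtain ⟨N, hN⟩ := hx
  have hle : powerSpan D X n ≤ (saturation p A).comap (AddMonoidHom.mulLeft a) := powerSpan_le hA
  refine mem_saturation_of_pow_smul_mem (N := N) ?_
  rw [← mul_smul_comm]
  exact hle hN

theorem mul_mem_saturation_powerSpan_succ {x : M} (hx : x ∈ saturation p (powerSpan D X n)) :
    X * x ∈ saturation p (powerSpan D X (n + 1)) := by
  refine mul_mem_saturation_of_mem_saturation_powerSpan (fun j hj z => ?_) hx
  rw [← mul_assoc, ← pow_succ']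
  exact le_saturation (pow_mul_mem_powerSpan (by omega) z)

section Twisted

variable {S : L →+* L} (hDU : ∀ z, D z * U = U * D (S z))
include hDU

theorem map_mul_pow (z : L) (j : ℕ) : D z * U ^ j = U ^ j * D ((S ^ j) z) := by
  induction j generalizing z with
  | zero => simp
  | succ j ih => rw [pow_succ', ← mul_assoc, hDU, mul_assoc, ih, pow_succ S, mul_assoc]; rfl

variable {l : ℤ} {α : L} (hY : p • Y = (l - U) * D α)
include hY

theorem smul_mul_pow_mul (j : ℕ) (z : L) :
    p • (Y * (U ^ j * D z)) =
      U ^ j * D (l * ((S ^ j) α * z)) + U ^ (j + 1) * D (-((S ^ j) α * z)) := by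
  rw [← smul_mul_assoc, hY, mul_assoc, ← mul_assoc (D α), map_mul_pow hDU, mul_assoc, ← map_mul,
    sub_mul, ← mul_assoc U, ← pow_succ', map_neg, mul_neg, ← sub_eq_add_neg, map_mul D (l : L),
    map_intCast, ← mul_assoc, ← mul_assoc, (Int.cast_commute l _).eq]

theorem mul_mem_saturation_powerSpan_twisted {x : M} (hx : x ∈ saturation p (powerSpan D U n)) :
    Y * x ∈ saturation p (powerSpan D U (n + 1)) := by
  refine mul_mem_saturation_of_mem_saturation_powerSpan (fun j hj z => ?_) hx
  refine mem_saturation_of_pow_smul_mem (N := 1) (le_saturation ?_)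
  rw [pow_one, smul_mul_pow_mul hDU hY]
  exact add_mem (pow_mul_mem_powerSpan (by omega) _) (pow_mul_mem_powerSpan (by omega) _)

variable {α' : L} {m : ℕ} (hα : α * α' = (p : L) ^ m)
include hα

theorem pow_smul_pow_succ_mul (j : ℕ) (z : L) :
    p ^ m • (U ^ (j + 1) * D z) =
      p • (Y * (U ^ j * D (-((S ^ j) α' * z)))) + U ^ j * D (l * p ^ m * z) := by
  have hSα : (S ^ j) α * (S ^ j) α' = (p : L) ^ m := by
    rw [← map_mul, hα, map_pow, map_natCast]
  rw [smul_mul_pow_mul hDU hY, ← mul_smul_comm, ← map_nsmul, add_right_comm, ← mul_add, ← map_add]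
  have hcancel : l * ((S ^ j) α * -((S ^ j) α' * z)) + l * p ^ m * z = 0 := by
    linear_combination -(l * z) * hSα
  have hlead : -((S ^ j) α * -((S ^ j) α' * z)) = p ^ m • z := by
    rw [nsmul_eq_mul, Nat.cast_pow]
    linear_combination z * hSα
  rw [hcancel, hlead, map_zero, mul_zero, zero_add]

theorem saturation_powerSpan_eq (n : ℕ) :
    saturation p (powerSpan D Y n) = saturation p (powerSpan D U n) := by
  induction n with
  | zero => simp [powerSpan]
  | succ n ih =>
    apply le_antisymm <;> refine saturation_le_saturation (powerSpan_le fun j hj z => ?_)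
    · obtain _ | j := j
      · simpa using le_saturation (pow_mul_mem_powerSpan (X := U) (D := D) n.succ_pos z)
      rw [pow_succ', mul_assoc]
      refine mul_mem_saturation_powerSpan_twisted hDU hY (ih ▸ le_saturation ?_)
      exact pow_mul_mem_powerSpan (by omega) z
    · obtain _ | j := j
      · simpa using le_saturation (pow_mul_mem_powerSpan (X := Y) (D := D) n.succ_pos z)
      have hU (w : L) : U ^ j * D w ∈ saturation p (powerSpan D Y n) :=
        ih ▸ le_saturation (pow_mul_mem_powerSpan (by omega) w)
      refine mem_saturation_of_pow_smul_mem (N := m) ?_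
      rw [pow_smul_pow_succ_mul hDU hY hα]
      exact add_mem (nsmul_mem (mul_mem_saturation_powerSpan_succ (hU _)) p)
        (saturation_le_saturation ((powerSpan_mono n.le_succ).trans le_saturation) (hU _))

end Twisted

end PowerSpan

/-! ### Twisted lattices consist of diagonal sums of squares -/

section Lattice

variable {L M : Type*} [CommRing L] [Ring M] {D : L →+* M} {S : L →+* L} {U Y : M} {n p : ℕ}
  {R : AddSubgroup M} {ι : Type*} [Fintype ι] [DecidableEq ι] [Nontrivial ι]

theorem map_mem_diagSumSq (hD : ∀ z, D z ∈ R) (hfrob : ∀ z : L, ∃ w y, z = w ^ 2 + 2 * y) (z : L) :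
    D z ∈ diagSumSq R ι := by
  obtain ⟨w, y, rfl⟩ := hfrob z
  rw [map_add, map_pow, two_mul, map_add]
  have h1 : 1 ∈ R := by simpa using hD 1
  exact add_mem (sq_mem_diagSumSq (hD w)) (add_self_mem_diagSumSq h1 (hD y))

theorem sum_map_mul_sub_mul_map {κ : Type*} (hDU : ∀ z, D z * U = U * D (S z)) (s : Finset κ)
    (η θ : κ → L) (j : ℕ) (z : L) :
    ∑ t ∈ s, (D (η t) * (U ^ j * D (-(θ t * z))) - U ^ j * D (-(θ t * z)) * D (η t)) =
      U ^ j * D ((∑ t ∈ s, (η t - (S ^ j) (η t)) * θ t) * z) := by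
  rw [Finset.sum_mul, map_sum, Finset.mul_sum]
  refine Finset.sum_congr rfl fun t _ => ?_
  rw [← mul_assoc, map_mul_pow hDU, mul_assoc, mul_assoc, ← map_mul, ← map_mul, ← mul_sub,
    ← map_sub]
  congr 2
  ring

theorem pow_mul_mem_saturation_diagSumSq {κ : Type*} (hD : ∀ z, D z ∈ R)
    (hDU : ∀ z, D z * U = U * D (S z)) {j : ℕ}
    (hU : ∀ z, U ^ j * D z ∈ saturation p R.toAddSubmonoid) {s : Finset κ} {η θ : κ → L}
    (hηθ : ∑ t ∈ s, (η t - (S ^ j) (η t)) * θ t = p) (z : L) :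
    U ^ j * D z ∈ saturation p (diagSumSq R ι) := by
  refine mem_saturation_of_pow_smul_mem (N := 1) ?_
  rw [pow_one, ← mul_smul_comm, ← map_nsmul, nsmul_eq_mul, ← hηθ, ← sum_map_mul_sub_mul_map hDU]
  have h1 : 1 ∈ R := by simpa using hD 1
  refine sum_mem fun t _ => mul_sub_mul_mem_saturation_diagSumSq h1 (hD _) (hU _) ?_
  rw [mul_assoc, ← map_mul]
  exact hU _

theorem le_diagSumSq_of_eq_powerSpan {κ : Type*} (hp : Odd p) (hn : 0 < n)
    (hR : R.toAddSubmonoid = powerSpan D Y n) (hDU : ∀ z, D z * U = U * D (S z)) {l : ℤ}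
    {α α' : L} {m : ℕ} (hY : p • Y = (l - U) * D α) (hα : α * α' = (p : L) ^ m)
    (hfrob : ∀ z : L, ∃ w y, z = w ^ 2 + 2 * y) {s : Finset κ} {η θ : κ → L}
    (hηθ : ∀ j, 0 < j → j < n → ∑ t ∈ s, (η t - (S ^ j) (η t)) * θ t = p) :
    R.toAddSubmonoid ≤ diagSumSq R ι := by
  have hD (z : L) : D z ∈ R := by
    rw [← AddSubgroup.mem_toAddSubmonoid, hR]
    simpa using pow_mul_mem_powerSpan hn z
  have hsat : saturation p R.toAddSubmonoid = saturation p (powerSpan D U n) := by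
    rw [hR, saturation_powerSpan_eq hDU hY hα]
  have hUQ : powerSpan D U n ≤ saturation p (diagSumSq R ι) := powerSpan_le fun j hj z => by
    obtain rfl | hj0 := Nat.eq_zero_or_pos j
    · simpa using le_saturation (map_mem_diagSumSq hD hfrob z)
    · exact pow_mul_mem_saturation_diagSumSq hD hDU
        (fun w => hsat ▸ le_saturation (pow_mul_mem_powerSpan hj w)) (hηθ j hj0 hj) z
  intro x hx
  obtain ⟨N, hN⟩ := saturation_le_saturation hUQ (hsat ▸ le_saturation hx)
  exact mem_diagSumSq_of_odd_nsmul_mem (by simpa using hD 1) hp.pow hx hN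

end Lattice

open scoped AddMonoidAlgebra

/-! ### Dilations of a group ring -/

section Dilate

variable {A : Type*} [CommRing A]

/-- The ring endomorphism `[a] ↦ [c * a]` of the group ring `ℤ[A]`; for `A = ZMod p` it lifts
`ζ ↦ ζ ^ c`. -/
def dilate (c : A) : ℤ[A] →+* ℤ[A] :=
  AddMonoidAlgebra.mapDomainRingHom ℤ (AddMonoidHom.mulLeft c)

/-- The elements of `ℤ[A]` fixed by `dilate c`. -/
def dilateFixed (c : A) : Subring (ℤ[A]) :=
  RingHom.eqLocus (dilate c) (RingHom.id _)

variable {c : A} {f : ℤ[A]}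

theorem mem_dilateFixed : f ∈ dilateFixed c ↔ dilate c f = f := Iff.rfl

@[simp]
theorem dilate_single (c a : A) (b : ℤ) :
    dilate c (AddMonoidAlgebra.single a b) = AddMonoidAlgebra.single (c * a) b := by
  simp [dilate]

theorem dilate_one_apply (f : ℤ[A]) : dilate 1 f = f := by
  suffices dilate (1 : A) = RingHom.id _ from congr($this f)
  ext <;> simp

theorem dilate_dilate (c d : A) (f : ℤ[A]) :
    dilate c (dilate d f) = dilate (c * d) f := by
  suffices (dilate c).comp (dilate d) = dilate (c * d) from congr($this f)
  ext <;> simp [mul_assoc]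

theorem dilate_mem_dilateFixed (d : A) (hf : f ∈ dilateFixed c) : dilate d f ∈ dilateFixed c := by
  rw [mem_dilateFixed] at hf ⊢
  rw [dilate_dilate, mul_comm, ← dilate_dilate, hf]

theorem coeff_dilate_mul (hc : IsUnit c) (f : ℤ[A]) (a : A) :
    (dilate c f).coeff (c * a) = f.coeff a :=
  Finsupp.mapDomain_apply hc.mul_right_injective f.coeff a

theorem exists_sq_eq_dilate_two_add (f : ℤ[A]) :
    ∃ y, f ^ 2 = dilate 2 f + 2 * y := by
  induction f using AddMonoidAlgebra.induction_linear with
  | zero => exact ⟨0, by simp⟩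
  | add f g hf hg =>
    obtain ⟨y, hy⟩ := hf
    obtain ⟨z, hz⟩ := hg
    exact ⟨y + z + f * g, by rw [map_add]; linear_combination hy + hz⟩
  | single a b =>
    obtain ⟨c, hc⟩ : ∃ c, b * b = b + (c + c) := by
      obtain ⟨c, hc⟩ := Int.even_mul_pred_self b
      exact ⟨c, by linear_combination hc⟩
    refine ⟨AddMonoidAlgebra.single (2 * a) c, ?_⟩
    rw [sq, AddMonoidAlgebra.single_mul_single, dilate_single, hc, two_mul, two_mul,
      ← AddMonoidAlgebra.single_add, ← AddMonoidAlgebra.single_add]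

theorem two_mul_cancel {f y : ℤ[A]} (h : 2 * f = 2 * y) : f = y := by
  ext a
  have hcoeff := congr(($h).coeff a)
  simp only [two_mul, AddMonoidAlgebra.coeff_add, Finsupp.add_apply] at hcoeff
  omega

theorem exists_eq_sq_add_two_mul (h2 : IsUnit (2 : A)) (hf : f ∈ dilateFixed c) :
    ∃ w ∈ dilateFixed c, ∃ y ∈ dilateFixed c, f = w ^ 2 + 2 * y := by
  obtain ⟨d, hd⟩ := h2.exists_right_inv
  obtain ⟨y, hy⟩ := exists_sq_eq_dilate_two_add (dilate d f)
  rw [dilate_dilate, hd, dilate_one_apply] at hy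
  have hw : dilate d f ∈ dilateFixed c := dilate_mem_dilateFixed d hf
  have h2y : 2 * y ∈ dilateFixed c := by
    rw [eq_sub_of_add_eq' hy.symm]
    exact sub_mem (pow_mem hw 2) hf
  have hyc : y ∈ dilateFixed c := mem_dilateFixed.2 <| two_mul_cancel <| by
    rwa [mem_dilateFixed, map_mul, map_ofNat] at h2y
  exact ⟨_, hw, -y, neg_mem hyc, by linear_combination -hy⟩

end Dilate

/-! ### Cosets of `n`-th powers -/

section Coset

@[to_additive sum_range_mul_eq_sum_sum]
theorem prod_range_mul_eq_prod_prod {M : Type*} [CommMonoid M] (F : ℕ → M) (n h : ℕ) :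
    ∏ t ∈ Finset.range (n * h), F t =
      ∏ s ∈ Finset.range n, ∏ r ∈ Finset.range h, F (n * r + s) := by
  rw [Finset.prod_comm]
  induction h with
  | zero => simp
  | succ h ih => rw [Finset.prod_range_succ, ← ih, mul_add, mul_one, Finset.prod_range_add]

@[to_additive]
theorem prod_range_add_of_periodic {M : Type*} [CommMonoid M] {f : ℕ → M} {h : ℕ}
    (hf : Function.Periodic f h) (t : ℕ) :
    ∏ r ∈ Finset.range h, f (r + t) = ∏ r ∈ Finset.range h, f r := by
  induction t with
  | zero => rfl
  | succ t ih =>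
    rw [← ih]
    obtain _ | k := h
    · rfl
    rw [Finset.prod_range_succ, Finset.prod_range_succ']
    congr 1
    · exact Finset.prod_congr rfl fun r _ => congr_arg f (by ring)
    · rw [← hf (0 + t)]
      exact congr_arg f (by ring)

@[to_additive sum_range_mul_add_of_periodic]
theorem prod_range_mul_add_of_periodic {M : Type*} [CommMonoid M] {F : ℕ → M} {n h : ℕ}
    (hF : Function.Periodic F (n * h)) (s t : ℕ) :
    ∏ r ∈ Finset.range h, F (n * r + (s + n * t)) = ∏ r ∈ Finset.range h, F (n * r + s) := by
  have hper : Function.Periodic (fun r => F (n * r + s)) h := fun r => by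
    simp only [mul_add, add_right_comm _ (n * h), hF _]
  rw [← prod_range_add_of_periodic hper t]
  exact Finset.prod_congr rfl fun r _ => congr_arg F (by ring)

theorem periodic_pow {G : Type*} [Monoid G] {γ : G} {m : ℕ} (hγ : γ ^ m = 1) :
    Function.Periodic (fun k : ℕ => γ ^ k) m := fun k => by
  simp [pow_add, hγ]

section Order

variable {G : Type*} [Monoid G] {γ : G} {p n h : ℕ} (hγ : orderOf γ = p - 1)
include hγ

theorem injOn_pow_range : Set.InjOn (γ ^ ·) (Finset.range (p - 1) : Set ℕ) := by
  rw [Finset.coe_range, ← hγ]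
  exact pow_injOn_Iio_orderOf

variable (hp : p = n * h + 1)
include hp

theorem pow_mul_eq_one : γ ^ (n * h) = 1 := by
  rw [show n * h = p - 1 by omega, ← hγ, pow_orderOf_eq_one]

theorem pow_eq_one_iff_of_lt {r j : ℕ} (hr : r < h) (hj : j < n) :
    γ ^ (n * r + j) = 1 ↔ r = 0 ∧ j = 0 := by
  have hlt : n * r + j < p - 1 := by
    have := Nat.mul_le_mul_left n hr
    rw [Nat.mul_succ] at this
    omega
  rw [← orderOf_dvd_iff_pow_eq_one, hγ]
  refine ⟨fun hdvd => ?_, by rintro ⟨rfl, rfl⟩; simp⟩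
  have := Nat.eq_zero_of_dvd_of_lt hdvd hlt
  simpa [(Nat.zero_le j).trans_lt hj |>.ne'] using this

end Order

variable {p n h : ℕ} [Fact p.Prime] {γ : ZMod p}

theorem pos_and_pos_of_prime_eq_mul_add_one (hp : p = n * h + 1) : 0 < n ∧ 0 < h := by
  have := (Fact.out : p.Prime).two_le
  exact CanonicallyOrderedAdd.mul_pos.1 (by omega)

section PrimitiveRoot

variable (hγ : orderOf γ = p - 1)
include hγ

theorem ne_zero_of_orderOf_eq : γ ≠ 0 := by
  rintro rfl
  have := (Fact.out : p.Prime).two_le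
  rw [orderOf_zero] at hγ
  omega

theorem image_pow_range : (Finset.range (p - 1)).image (γ ^ ·) = Finset.univ.erase 0 := by
  refine Finset.eq_of_subset_of_card_le (fun x hx => ?_) ?_
  · obtain ⟨t, -, rfl⟩ := Finset.mem_image.1 hx
    simp [ne_zero_of_orderOf_eq hγ]
  · rw [Finset.card_image_of_injOn (injOn_pow_range hγ)]
    simp [ZMod.card]

variable (hp : p = n * h + 1)
include hp

@[to_additive]
theorem prod_ne_zero_eq_prod_prod {M : Type*} [CommMonoid M] (F : ZMod p → M) :
    ∏ a ∈ Finset.univ.erase (0 : ZMod p), F a =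
      ∏ s ∈ Finset.range n, ∏ r ∈ Finset.range h, F (γ ^ (n * r + s)) := by
  rw [← prod_range_mul_eq_prod_prod (fun t => F (γ ^ t)), ← image_pow_range hγ,
    Finset.prod_image (injOn_pow_range hγ), show p - 1 = n * h by omega]

end PrimitiveRoot

end Coset

/-! ### Gaussian periods -/

section Period

variable {p : ℕ}

section NeZero

variable [NeZero p]

/-- The specialisation `[a] ↦ ζ ^ a` of the group ring of `ZMod p` at `ζ = e^{2πi/p}`. -/
def evalChar (p : ℕ) [NeZero p] : ℤ[ZMod p] →ₐ[ℤ] ℂ :=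
  AddMonoidAlgebra.lift ℤ ℂ (ZMod p) (ZMod.stdAddChar (N := p)).toMonoidHom

@[simp]
theorem evalChar_single (a : ZMod p) (b : ℤ) :
    evalChar p (AddMonoidAlgebra.single a b) = b * ZMod.stdAddChar a := by
  simp [evalChar]

theorem evalChar_eq_sum (f : ℤ[ZMod p]) :
    evalChar p f = ∑ a, (f.coeff a : ℂ) * ZMod.stdAddChar a := by
  rw [evalChar, AddMonoidAlgebra.lift_apply, Finsupp.sum_fintype _ _ (by simp)]
  simp

theorem stdAddChar_natCast (m : ℕ) : (ZMod.stdAddChar (m : ZMod p) : ℂ) = zetaC p ^ m := by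
  rw [zetaC, ← Complex.exp_nat_mul, ← Int.cast_natCast, ZMod.stdAddChar_coe]
  congr 1
  push_cast
  ring

end NeZero

variable [Fact p.Prime]

theorem sum_ne_zero_stdAddChar_mul (b : ZMod p) :
    ∑ a ∈ Finset.univ.erase (0 : ZMod p), (ZMod.stdAddChar (a * b) : ℂ) =
      (if b = 0 then (p : ℂ) else 0) - 1 := by
  have htotal := AddChar.sum_mulShift b (ZMod.isPrimitive_stdAddChar p)
  rw [← Finset.add_sum_erase _ _ (Finset.mem_univ 0), zero_mul, AddChar.map_zero_eq_one,
    ZMod.card] at htotal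
  rw [eq_sub_iff_add_eq', htotal]
  split_ifs <;> simp

theorem prod_ne_zero_eq_prod_range_succ {M : Type*} [CommMonoid M] (F : ZMod p → M) :
    ∏ a ∈ Finset.univ.erase (0 : ZMod p), F a = ∏ k ∈ Finset.range (p - 1), F ↑(k + 1) := by
  have hp := (Fact.out : p.Prime).two_le
  symm
  refine Finset.prod_nbij' (fun k => ((k + 1 : ℕ) : ZMod p)) (fun a => a.val - 1) ?_ ?_ ?_ ?_ ?_
  · intro k hk
    rw [Finset.mem_range] at hk
    refine Finset.mem_erase.2 ⟨fun h0 => ?_, Finset.mem_univ _⟩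
    have := Nat.le_of_dvd k.succ_pos ((ZMod.natCast_eq_zero_iff _ _).1 h0)
    omega
  · intro a _
    have := a.val_lt
    rw [Finset.mem_range]
    omega
  · intro k hk
    rw [Finset.mem_range] at hk
    rw [ZMod.val_cast_of_lt (by omega), Nat.add_sub_cancel]
  · intro a ha
    have := (ZMod.val_ne_zero a).2 (Finset.ne_of_mem_erase ha)
    rw [Nat.sub_add_cancel (by omega), ZMod.natCast_rightInverse a]
  · exact fun _ _ => rfl

theorem prod_ne_zero_one_sub_stdAddChar :
    ∏ a ∈ Finset.univ.erase (0 : ZMod p), (1 - ZMod.stdAddChar a : ℂ) = p := by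
  have hp : p - 1 + 1 = p := Nat.sub_add_cancel (Fact.out : p.Prime).one_le
  have hζ : IsPrimitiveRoot (zetaC p) (p - 1 + 1) := by
    rw [hp]
    exact Complex.isPrimitiveRoot_exp p (NeZero.ne p)
  simp only [prod_ne_zero_eq_prod_range_succ, stdAddChar_natCast]
  rw [hζ.prod_one_sub_pow_eq_order]
  exact_mod_cast hp

end Period

/-! ### Gaussian periods in the group ring -/

section PeriodElt

variable {A : Type*} [CommRing A] {n h : ℕ} {γ : A}

/-- The element `∑ r < h, [γ ^ (n r + s)]` of the group ring, a lift of the Gaussian period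
`η_s`. -/
def periodElt (n h : ℕ) (γ : A) (s : ℕ) : ℤ[A] :=
  ∑ r ∈ Finset.range h, AddMonoidAlgebra.single (γ ^ (n * r + s)) 1

/-- The element `∏ r < h, (1 - [γ ^ (n r + s)])` of the group ring, a lift of the `s`-th conjugate
of `β`. -/
def normElt (n h : ℕ) (γ : A) (s : ℕ) : ℤ[A] :=
  ∏ r ∈ Finset.range h, (1 - AddMonoidAlgebra.single (γ ^ (n * r + s)) 1)

theorem dilate_pow_periodElt (j s : ℕ) :
    dilate (γ ^ j) (periodElt n h γ s) = periodElt n h γ (s + j) := by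
  simp only [periodElt, map_sum, dilate_single, ← pow_add, add_left_comm j, add_comm j]

theorem dilate_pow_normElt (j s : ℕ) :
    dilate (γ ^ j) (normElt n h γ s) = normElt n h γ (s + j) := by
  simp only [normElt, map_prod, map_sub, map_one, dilate_single, ← pow_add, add_left_comm j,
    add_comm j]

theorem periodElt_mem_dilateFixed (hγ : γ ^ (n * h) = 1) (s : ℕ) :
    periodElt n h γ s ∈ dilateFixed (γ ^ n) := by
  rw [mem_dilateFixed, dilate_pow_periodElt]
  simpa [periodElt] using sum_range_mul_add_of_periodic
    ((periodic_pow hγ).comp fun a => AddMonoidAlgebra.single a (1 : ℤ)) s 1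

theorem normElt_mem_dilateFixed (hγ : γ ^ (n * h) = 1) (s : ℕ) :
    normElt n h γ s ∈ dilateFixed (γ ^ n) := by
  rw [mem_dilateFixed, dilate_pow_normElt]
  simpa [normElt] using prod_range_mul_add_of_periodic
    ((periodic_pow hγ).comp fun a => 1 - AddMonoidAlgebra.single a (1 : ℤ)) s 1

theorem coeff_pow_mul_add {f : ℤ[A]} (hγ : IsUnit γ) (hf : f ∈ dilateFixed (γ ^ n)) (r s : ℕ) :
    f.coeff (γ ^ (n * r + s)) = f.coeff (γ ^ s) := by
  induction r with
  | zero => simp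
  | succ r ih =>
    rw [← ih, ← coeff_dilate_mul (hγ.pow n) f (γ ^ (n * r + s)), mem_dilateFixed.1 hf, ← pow_add]
    congr 2
    ring

end PeriodElt

section PeriodEval

variable {p n h : ℕ} {γ : ZMod p}

theorem evalChar_periodElt [NeZero p] (s : ℕ) :
    evalChar p (periodElt n h γ s) =
      ∑ r ∈ Finset.range h, (ZMod.stdAddChar (γ ^ (n * r + s)) : ℂ) := by
  simp [periodElt]

theorem evalChar_normElt [NeZero p] (s : ℕ) :
    evalChar p (normElt n h γ s) =
      ∏ r ∈ Finset.range h, (1 - ZMod.stdAddChar (γ ^ (n * r + s)) : ℂ) := by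
  simp [normElt]

variable [Fact p.Prime] (hγ : orderOf γ = p - 1) (hp : p = n * h + 1)
include hγ hp

theorem prod_evalChar_normElt : ∏ s ∈ Finset.range n, evalChar p (normElt n h γ s) = p := by
  simp only [evalChar_normElt]
  rw [← prod_ne_zero_one_sub_stdAddChar, prod_ne_zero_eq_prod_prod hγ hp]

theorem sum_evalChar_periodElt :
    ∑ s ∈ Finset.range n, evalChar p (periodElt n h γ s) = -1 := by
  have hsum := sum_ne_zero_stdAddChar_mul (1 : ZMod p)
  rw [if_neg one_ne_zero, sum_ne_zero_eq_sum_sum hγ hp] at hsum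
  simpa [evalChar_periodElt] using hsum

theorem evalChar_eq_sum_evalChar_periodElt {f : ℤ[ZMod p]} (hf : f ∈ dilateFixed (γ ^ n)) :
    evalChar p f = ∑ s ∈ Finset.range n,
      ((f.coeff (γ ^ s) - f.coeff 0 : ℤ) : ℂ) * evalChar p (periodElt n h γ s) := by
  have hcoset (s : ℕ) : ∑ r ∈ Finset.range h,
      (f.coeff (γ ^ (n * r + s)) : ℂ) * ZMod.stdAddChar (γ ^ (n * r + s)) =
        f.coeff (γ ^ s) * evalChar p (periodElt n h γ s) := by
    simp only [coeff_pow_mul_add (ne_zero_of_orderOf_eq hγ).isUnit hf, evalChar_periodElt,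
      Finset.mul_sum]
  rw [evalChar_eq_sum, ← Finset.add_sum_erase _ _ (Finset.mem_univ 0),
    sum_ne_zero_eq_sum_sum hγ hp]
  simp only [hcoset, Int.cast_sub, sub_mul, Finset.sum_sub_distrib, ← Finset.mul_sum,
    sum_evalChar_periodElt hγ hp, AddChar.map_zero_eq_one]
  ring

/-- `dilate (-1)` lifts complex conjugation. -/
theorem sum_evalChar_periodElt_mul_conj (j : ℕ) :
    ∑ s ∈ Finset.range n,
      evalChar p (periodElt n h γ (s + j)) * evalChar p (dilate (-1) (periodElt n h γ s)) =
        ∑ t ∈ Finset.range h, ((if γ ^ (n * t + j) = 1 then (p : ℂ) else 0) - 1) := by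
  have hshift (s r : ℕ) : evalChar p (periodElt n h γ (s + j)) =
      ∑ t ∈ Finset.range h, (ZMod.stdAddChar (γ ^ (n * r + s) * γ ^ (n * t + j)) : ℂ) := by
    have hper := (periodic_pow (pow_mul_eq_one hγ hp)).comp fun a => (ZMod.stdAddChar a : ℂ)
    rw [evalChar_periodElt]
    refine (sum_range_mul_add_of_periodic hper (s + j) r).symm.trans ?_
    refine Finset.sum_congr rfl fun t _ => ?_
    rw [← pow_add, Function.comp_apply]
    ring_nf
  have hconj (s : ℕ) : evalChar p (dilate (-1) (periodElt n h γ s)) =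
      ∑ r ∈ Finset.range h, (ZMod.stdAddChar (-γ ^ (n * r + s)) : ℂ) := by
    simp [periodElt]
  calc ∑ s ∈ Finset.range n,
        evalChar p (periodElt n h γ (s + j)) * evalChar p (dilate (-1) (periodElt n h γ s))
      = ∑ s ∈ Finset.range n, ∑ r ∈ Finset.range h, ∑ t ∈ Finset.range h,
          (ZMod.stdAddChar (γ ^ (n * r + s) * (γ ^ (n * t + j) - 1)) : ℂ) := by
        refine Finset.sum_congr rfl fun s _ => ?_
        rw [hconj, Finset.mul_sum]
        refine Finset.sum_congr rfl fun r _ => ?_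
        rw [hshift s r, Finset.sum_mul]
        refine Finset.sum_congr rfl fun t _ => ?_
        rw [← AddChar.map_add_eq_mul, mul_sub, mul_one, sub_eq_add_neg]
    _ = ∑ t ∈ Finset.range h, ∑ a ∈ Finset.univ.erase (0 : ZMod p),
          (ZMod.stdAddChar (a * (γ ^ (n * t + j) - 1)) : ℂ) := by
        rw [← sum_ne_zero_eq_sum_sum hγ hp fun a => ∑ t ∈ Finset.range h,
          (ZMod.stdAddChar (a * (γ ^ (n * t + j) - 1)) : ℂ), Finset.sum_comm]
    _ = _ := by simp only [sum_ne_zero_stdAddChar_mul, sub_eq_zero]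

theorem sum_evalChar_periodElt_sub_mul_conj {j : ℕ} (hj0 : 0 < j) (hjn : j < n) :
    ∑ s ∈ Finset.range n,
      (evalChar p (periodElt n h γ s) - evalChar p (periodElt n h γ (s + j))) *
        evalChar p (dilate (-1) (periodElt n h γ s)) = p := by
  have hh : 0 < h := (pos_and_pos_of_prime_eq_mul_add_one hp).2
  have hzero := sum_evalChar_periodElt_mul_conj hγ hp 0
  have hpos := sum_evalChar_periodElt_mul_conj hγ hp j
  have hiff {i : ℕ} (hi : i < n) : ∀ t ∈ Finset.range h,
      ((if γ ^ (n * t + i) = 1 then (p : ℂ) else 0) - 1) =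
        (if t = 0 ∧ i = 0 then (p : ℂ) else 0) - 1 := fun t ht => by
    simp only [pow_eq_one_iff_of_lt hγ hp (Finset.mem_range.1 ht) hi]
  rw [Finset.sum_congr rfl (hiff (hj0.trans hjn))] at hzero
  rw [Finset.sum_congr rfl (hiff hjn)] at hpos
  simp only [add_zero] at hzero
  simp only [sub_mul, Finset.sum_sub_distrib, hzero, hpos]
  simp [hj0.ne', hh.ne']

end PeriodEval

/-! ### The ring of periods -/

section PeriodRing

variable {n p h g : ℕ} {S : Zf n p h g ≃ₐ[ℚ] Zf n p h g}

section NeZero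

variable [NeZero p]

theorem gaussPeriod_eq_evalChar (s : ℕ) :
    gaussPeriod n p h g s = evalChar p (periodElt n h (g : ZMod p) s) := by
  simp only [gaussPeriod, evalChar_periodElt, ← Nat.cast_pow, stdAddChar_natCast]

/-- The ring spanned over `ℤ` by the Gaussian periods, realised as the elements of `ℚ(η)` that lift
to elements of `ℤ[ZMod p]` fixed by `dilate (g ^ n)`. -/
def periodRing (n p h g : ℕ) [NeZero p] : Subring (Zf n p h g) :=
  ((dilateFixed ((g : ZMod p) ^ n)).map (evalChar p).toRingHom).comap
    (algebraMap (Zf n p h g) ℂ)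

theorem mem_periodRing {z : Zf n p h g} :
    z ∈ periodRing n p h g ↔ ∃ f ∈ dilateFixed ((g : ZMod p) ^ n), evalChar p f = (z : ℂ) :=
  Iff.rfl

/-- The embedding of the ring of periods into `ℂ`. -/
def periodEmb (n p h g : ℕ) [NeZero p] : periodRing n p h g →+* ℂ :=
  (algebraMap (Zf n p h g) ℂ).comp (periodRing n p h g).subtype

theorem periodEmb_injective : Function.Injective (periodEmb n p h g) :=
  Subtype.coe_injective.comp Subtype.coe_injective

theorem periodEmb_mk (z : Zf n p h g) (hz : z ∈ periodRing n p h g) :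
    periodEmb n p h g ⟨z, hz⟩ = z := rfl

end NeZero

variable [Fact p.Prime] (hg : orderOf (g : ZMod p) = p - 1) (hp : p = n * h + 1)
  (hS : ∀ s : ℕ, (((S ^ s) (etaZ n p h g) : Zf n p h g) : ℂ) = gaussPeriod n p h g s)
include hg hp hS

theorem pow_etaZ_mem_periodRing (s : ℕ) : (S ^ s) (etaZ n p h g) ∈ periodRing n p h g :=
  mem_periodRing.2 ⟨_, periodElt_mem_dilateFixed (pow_mul_eq_one hg hp) s,
    by rw [hS, gaussPeriod_eq_evalChar]⟩

theorem pow_add_etaZ (s : ℕ) : (S ^ (s + n)) (etaZ n p h g) = (S ^ s) (etaZ n p h g) := by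
  apply Subtype.ext
  rw [hS, hS, gaussPeriod_eq_evalChar, gaussPeriod_eq_evalChar, ← dilate_pow_periodElt,
    mem_dilateFixed.1 (periodElt_mem_dilateFixed (pow_mul_eq_one hg hp) s)]

theorem evalChar_eq_coe_sum {f : ℤ[ZMod p]} (hf : f ∈ dilateFixed ((g : ZMod p) ^ n)) :
    evalChar p f = ((∑ s : Fin n, (f.coeff ((g : ZMod p) ^ (s : ℕ)) - f.coeff 0) •
      (S ^ (s : ℕ)) (etaZ n p h g) : Zf n p h g) : ℂ) := by
  rw [evalChar_eq_sum_evalChar_periodElt hg hp hf, Finset.sum_range]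
  push_cast [zsmul_eq_mul]
  simp only [hS, gaussPeriod_eq_evalChar]

theorem mem_periodRing_iff_exists_sum {z : Zf n p h g} :
    z ∈ periodRing n p h g ↔
      ∃ c : Fin n → ℤ, z = ∑ s, c s • (S ^ (s : ℕ)) (etaZ n p h g) := by
  constructor
  · rintro ⟨f, hf, hz⟩
    exact ⟨_, Subtype.ext (hz.symm.trans (evalChar_eq_coe_sum hg hp hS hf))⟩
  · rintro ⟨c, rfl⟩
    exact sum_mem fun s _ => zsmul_mem (pow_etaZ_mem_periodRing hg hp hS s) (c s)

theorem exists_periodEmb_eq_evalChar {f : ℤ[ZMod p]} (hf : f ∈ dilateFixed ((g : ZMod p) ^ n)) :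
    ∃ z, periodEmb n p h g z = evalChar p f :=
  have hsum := evalChar_eq_coe_sum hg hp hS hf
  ⟨⟨_, mem_periodRing.2 ⟨f, hf, hsum⟩⟩, hsum.symm⟩

theorem apply_mem_periodRing {z : Zf n p h g} (hz : z ∈ periodRing n p h g) :
    S z ∈ periodRing n p h g := by
  obtain ⟨c, rfl⟩ := (mem_periodRing_iff_exists_sum hg hp hS).1 hz
  rw [map_sum]
  refine sum_mem fun s _ => ?_
  rw [map_zsmul, ← AlgEquiv.mul_apply, ← pow_succ']
  exact zsmul_mem (pow_etaZ_mem_periodRing hg hp hS _) (c s)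

theorem pow_apply_of_mem_periodRing {z : Zf n p h g} (hz : z ∈ periodRing n p h g) :
    (S ^ n) z = z := by
  obtain ⟨c, rfl⟩ := (mem_periodRing_iff_exists_sum hg hp hS).1 hz
  simp only [map_sum, map_zsmul, ← AlgEquiv.mul_apply, ← pow_add, add_comm n,
    pow_add_etaZ hg hp hS]

theorem exists_eq_sq_add_two_mul_periodRing (hp2 : p ≠ 2) (z : periodRing n p h g) :
    ∃ w y : periodRing n p h g, z = w ^ 2 + 2 * y := by
  have h2 : IsUnit (2 : ZMod p) := by
    have hodd := ((Nat.coprime_primes Nat.prime_two Fact.out).2 hp2.symm)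
    exact_mod_cast (ZMod.isUnit_iff_coprime 2 p).2 hodd
  obtain ⟨f, hf, hz⟩ := mem_periodRing.1 z.2
  obtain ⟨w, hw, y, hy, rfl⟩ := exists_eq_sq_add_two_mul h2 hf
  obtain ⟨w', hw'⟩ := exists_periodEmb_eq_evalChar hg hp hS hw
  obtain ⟨y', hy'⟩ := exists_periodEmb_eq_evalChar hg hp hS hy
  have hz' : periodEmb n p h g z = evalChar p (w ^ 2 + 2 * y) := hz.symm
  refine ⟨w', y', periodEmb_injective ?_⟩
  simp only [hz', map_add, map_mul, map_pow, map_ofNat, hw', hy']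

theorem exists_mul_eq_prime {β : Zf n p h g}
    (hβ : (β : ℂ) = ∏ r ∈ Finset.range h, (1 - zetaC p ^ (g ^ (n * r)))) :
    ∃ b b' : periodRing n p h g, (b : Zf n p h g) = β ∧ b * b' = p := by
  have hfix := normElt_mem_dilateFixed (pow_mul_eq_one hg hp)
  have hn : 0 ∈ Finset.range n :=
    Finset.mem_range.2 (pos_and_pos_of_prime_eq_mul_add_one hp).1
  obtain ⟨b, hb⟩ := exists_periodEmb_eq_evalChar hg hp hS (hfix 0)
  obtain ⟨b', hb'⟩ := exists_periodEmb_eq_evalChar hg hp hS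
    (prod_mem fun s (_ : s ∈ (Finset.range n).erase 0) => hfix s)
  refine ⟨b, b', Subtype.ext (hb.trans ?_), periodEmb_injective ?_⟩
  · simp only [hβ, evalChar_normElt, add_zero, ← Nat.cast_pow, stdAddChar_natCast]
  · rw [map_mul, hb, hb', map_natCast, map_prod,
      Finset.mul_prod_erase _ (fun s => evalChar p (normElt n h _ s)) hn,
      prod_evalChar_normElt hg hp]

/-- The restriction of `S` to the ring of periods. -/
def periodRingMap : periodRing n p h g →+* periodRing n p h g :=
  (S : Zf n p h g →+* Zf n p h g).restrict _ _ fun _ => apply_mem_periodRing hg hp hS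

theorem periodRingMap_pow_apply (j : ℕ) (z : periodRing n p h g) :
    (((periodRingMap hg hp hS ^ j) z : periodRing n p h g) : Zf n p h g) = (S ^ j) z := by
  induction j with
  | zero => rfl
  | succ j ih => rw [pow_succ', pow_succ', AlgEquiv.mul_apply, ← ih]; rfl

theorem periodEmb_periodRingMap_pow_etaZ (s j : ℕ) :
    periodEmb n p h g ((periodRingMap hg hp hS ^ j) ⟨_, pow_etaZ_mem_periodRing hg hp hS s⟩) =
      evalChar p (periodElt n h (g : ZMod p) (s + j)) := by
  rw [← gaussPeriod_eq_evalChar, ← hS, add_comm, pow_add, AlgEquiv.mul_apply]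
  exact congr_arg (algebraMap (Zf n p h g) ℂ) (periodRingMap_pow_apply hg hp hS j _)

theorem exists_dual_periods :
    ∃ η θ : ℕ → periodRing n p h g, ∀ j, 0 < j → j < n →
      ∑ s ∈ Finset.range n, (η s - (periodRingMap hg hp hS ^ j) (η s)) * θ s = p := by
  choose θ hθ using fun s => exists_periodEmb_eq_evalChar hg hp hS
    (dilate_mem_dilateFixed (-1) (periodElt_mem_dilateFixed (pow_mul_eq_one hg hp) s))
  refine ⟨fun s => ⟨_, pow_etaZ_mem_periodRing hg hp hS s⟩, θ, fun j hj0 hjn =>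
    periodEmb_injective ?_⟩
  rw [map_natCast, ← sum_evalChar_periodElt_sub_mul_conj hg hp hj0 hjn, map_sum]
  refine Finset.sum_congr rfl fun s _ => ?_
  rw [map_mul, map_sub, hθ, periodEmb_periodRingMap_pow_etaZ, periodEmb_mk, hS,
    gaussPeriod_eq_evalChar]

end PeriodRing

/-! ### The cyclic algebra -/

section CyclicAlgebra

variable {n p h g : ℕ} {S : Zf n p h g ≃ₐ[ℚ] Zf n p h g}

/-- The diagonal embedding `D` as a ring homomorphism. -/
def diagHom (S : Zf n p h g ≃ₐ[ℚ] Zf n p h g) :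
    Zf n p h g →+* Matrix (Fin n) (Fin n) (Zf n p h g) :=
  (Matrix.diagonalRingHom (Fin n) _).comp
    (RingHom.pi fun i : Fin n => ((S ^ (i : ℕ) : _ ≃ₐ[ℚ] _) : Zf n p h g →+* Zf n p h g))

theorem diagHom_apply (z : Zf n p h g) : diagHom S z = Dm n p h g S z := rfl

theorem diagHom_mul_Um (σ : ℕ) {z : Zf n p h g} (hz : (S ^ n) z = z) :
    diagHom S z * Um n p h g σ = Um n p h g σ * diagHom S (S z) := by
  have hsucc (j : ℕ) : (S ^ j) (S z) = (S ^ (j + 1)) z := by rw [pow_succ, AlgEquiv.mul_apply]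
  ext i j : 1
  rw [diagHom_apply, diagHom_apply, Dm, Dm, Matrix.diagonal_mul, Matrix.mul_diagonal, hsucc, Um,
    Matrix.of_apply, mul_comm]
  split_ifs with hij hwrap
  · rw [hij]
  · rw [hwrap.1, hwrap.2, Nat.sub_add_cancel (by omega), hz, pow_zero, AlgEquiv.one_apply]
  · rw [zero_mul, zero_mul]

theorem smul_Ym (hp : p ≠ 0) (σ : ℕ) (lam : ℤ) (β : Zf n p h g) :
    p • Ym n p h g σ lam S β = (lam - Um n p h g σ) * diagHom S (β ^ (n - 1)) := by
  rw [Ym, ← Nat.cast_smul_eq_nsmul (Zf n p h g), smul_inv_smul₀ (Nat.cast_ne_zero.2 hp),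
    diagHom_apply, Int.cast_smul_eq_zsmul, zsmul_one]

/-- The restriction of `D` to the ring of periods. -/
abbrev periodDiagHom [NeZero p] (S : Zf n p h g ≃ₐ[ℚ] Zf n p h g) :
    periodRing n p h g →+* Matrix (Fin n) (Fin n) (Zf n p h g) :=
  (diagHom S).comp (periodRing n p h g).subtype

/-- The lattice spanned by the `Y ^ i D(z)` with `z` in the ring of periods. -/
def orderLattice [NeZero p] (σ : ℕ) (lam : ℤ) (S : Zf n p h g ≃ₐ[ℚ] Zf n p h g) (β : Zf n p h g) :
    AddSubgroup (Matrix (Fin n) (Fin n) (Zf n p h g)) where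
  __ := powerSpan (periodDiagHom S) (Ym n p h g σ lam S β) n
  neg_mem' := neg_mem_powerSpan

variable [Fact p.Prime] (hg : orderOf (g : ZMod p) = p - 1) (hp : p = n * h + 1)
  (hS : ∀ s : ℕ, (((S ^ s) (etaZ n p h g) : Zf n p h g) : ℂ) = gaussPeriod n p h g s)
include hp

theorem one_mem_orderLattice {σ : ℕ} {lam : ℤ} {β : Zf n p h g} :
    1 ∈ orderLattice σ lam S β := by
  have hn : 0 < n := (pos_and_pos_of_prime_eq_mul_add_one hp).1
  have hone := pow_mul_mem_powerSpan (D := periodDiagHom S)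
    (X := Ym n p h g σ lam S β) hn 1
  rwa [pow_zero, one_mul, map_one] at hone

include hg hS

theorem mem_orderLattice_iff {σ : ℕ} {lam : ℤ} {β : Zf n p h g}
    {M : Matrix (Fin n) (Fin n) (Zf n p h g)} :
    M ∈ orderLattice σ lam S β ↔ M ∈ Iorder n p h g σ lam S β := by
  have hsum (c : Fin n → ℤ) (i : ℕ) :
      ∑ s : Fin n, c s • (Ym n p h g σ lam S β ^ i * Dm n p h g S ((S ^ (s : ℕ)) (etaZ n p h g))) =
        Ym n p h g σ lam S β ^ i *
          diagHom S (∑ s : Fin n, c s • (S ^ (s : ℕ)) (etaZ n p h g)) := by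
    simp only [map_sum, map_zsmul, Finset.mul_sum, mul_smul_comm, diagHom_apply]
  refine mem_powerSpan_iff.trans ⟨?_, ?_⟩
  · rintro ⟨z, rfl⟩
    choose c hc using fun i => (mem_periodRing_iff_exists_sum hg hp hS).1 (z i).2
    exact ⟨c, by simp only [hsum, ← hc]; rfl⟩
  · rintro ⟨c, rfl⟩
    exact ⟨fun i => ⟨_, (mem_periodRing_iff_exists_sum hg hp hS).2 ⟨c i, rfl⟩⟩,
      Finset.sum_congr rfl fun i _ => hsum (c i) i⟩

theorem orderLattice_le_diagSumSq (hp2 : p ≠ 2) (σ : ℕ) (lam : ℤ) {β : Zf n p h g}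
    (hβ : (β : ℂ) = ∏ r ∈ Finset.range h, (1 - zetaC p ^ (g ^ (n * r))))
    {ι : Type*} [Fintype ι] [DecidableEq ι] [Nontrivial ι] :
    (orderLattice σ lam S β).toAddSubmonoid ≤ diagSumSq (orderLattice σ lam S β) ι := by
  have hprime : p.Prime := Fact.out
  have hn : 0 < n := (pos_and_pos_of_prime_eq_mul_add_one hp).1
  obtain ⟨b, b', rfl, hbb'⟩ := exists_mul_eq_prime hg hp hS hβ
  obtain ⟨η, θ, hηθ⟩ := exists_dual_periods hg hp hS
  have hDU (z : periodRing n p h g) : periodDiagHom S z * Um n p h g σ =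
      Um n p h g σ * periodDiagHom S (periodRingMap hg hp hS z) :=
    diagHom_mul_Um σ (pow_apply_of_mem_periodRing hg hp hS z.2)
  have hY : p • Ym n p h g σ lam S b =
      (lam - Um n p h g σ) * periodDiagHom S (b ^ (n - 1)) := by
    rw [smul_Ym hprime.ne_zero, RingHom.comp_apply, Subring.subtype_apply, Subring.coe_pow]
  have hα : b ^ (n - 1) * b' ^ (n - 1) = (p : periodRing n p h g) ^ (n - 1) := by
    rw [← mul_pow, hbb']
  exact le_diagSumSq_of_eq_powerSpan (hprime.odd_of_ne_two hp2) hn rfl hDU hY hα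
    (exists_eq_sq_add_two_mul_periodRing hg hp hS hp2) hηθ

end CyclicAlgebra

end CyclicOrder

theorem matrices_over_maximal_order_deg_three_sum_of_squares_general
    (n p h g σ : ℕ) (lam : ℤ)
    (hp : p.Prime)
    (hp2 : p ≠ 2)
    (hph : p = n * h + 1)
    (hg : orderOf (g : ZMod p) = p - 1)
    (S : Zf n p h g ≃ₐ[ℚ] Zf n p h g)
    (hS : ∀ s : ℕ, (((S ^ s) (etaZ n p h g) : Zf n p h g) : ℂ) = gaussPeriod n p h g s)
    (β : Zf n p h g)
    (hβ : (β : ℂ) = ∏ r ∈ Finset.range h, (1 - zetaC p ^ (g ^ (n * r))))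
    (k : ℕ) (hk : 2 ≤ k)
    (C : Matrix (Fin k) (Fin k) (Matrix (Fin n) (Fin n) (Zf n p h g)))
    (hC : ∀ i j, C i j ∈ Iorder n p h g σ lam S β) :
    ∃ (m : ℕ) (A : Fin m → Matrix (Fin k) (Fin k) (Matrix (Fin n) (Fin n) (Zf n p h g))),
      (∀ t i j, A t i j ∈ Iorder n p h g σ lam S β) ∧ C = ∑ t, A t ^ 2 := by
  have : Fact p.Prime := ⟨hp⟩
  have : Nontrivial (Fin k) := Fin.nontrivial_iff_two_le.2 hk
  simp only [← CyclicOrder.mem_orderLattice_iff hg hph hS] at hC ⊢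
  exact CyclicOrder.exists_eq_sum_sq_of_mem_matrixSumSq <| CyclicOrder.matrix_le_matrixSumSq
    (CyclicOrder.one_mem_orderLattice hph)
    (CyclicOrder.orderLattice_le_diagSumSq hg hph hS hp2 σ lam hβ) hC

/-- If `n = 3` and `σ ≡ 1 (mod 2)`, then for every `k ≥ 2` every `k × k`
matrix with entries in the maximal order `𝔪 = I(λ)` is a sum of squares of `k × k`
matrices with entries in `𝔪`. -/
theorem matrices_over_maximal_order_deg_three_sum_of_squares
    (n p h g σ : ℕ) (lam : ℤ)
    (hn3 : n = 3)
    (hp : p.Prime)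
    (hph : p = n * h + 1)
    (hg : orderOf (g : ZMod p) = p - 1)
    (hσfac : ∃ qs : Finset ℕ, 2 ≤ qs.card ∧
      (∀ q ∈ qs, q.Prime ∧ ¬ ∃ x : ZMod p, x ^ n = (q : ZMod p)) ∧ σ = ∏ q ∈ qs, q)
    (hσres : ∃ x : ZMod p, x ^ n = (σ : ZMod p))
    (hσcop : Nat.Coprime σ p)
    (hlam : (lam : ZMod p) ^ n = (σ : ZMod p))
    (S : Zf n p h g ≃ₐ[ℚ] Zf n p h g)
    (hS : ∀ s : ℕ, (((S ^ s) (etaZ n p h g) : Zf n p h g) : ℂ) = gaussPeriod n p h g s)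
    (β : Zf n p h g)
    (hβ : (β : ℂ) = ∏ r ∈ Finset.range h, (1 - zetaC p ^ (g ^ (n * r))))
    (hσodd : σ % 2 = 1)
    (k : ℕ) (hk : 2 ≤ k)
    (C : Matrix (Fin k) (Fin k) (Matrix (Fin n) (Fin n) (Zf n p h g)))
    (hC : ∀ i j, C i j ∈ Iorder n p h g σ lam S β) :
    ∃ (m : ℕ) (A : Fin m → Matrix (Fin k) (Fin k) (Matrix (Fin n) (Fin n) (Zf n p h g))),
      (∀ t i j, A t i j ∈ Iorder n p h g σ lam S β) ∧ C = ∑ t, A t ^ 2 := by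
  subst hn3
  exact matrices_over_maximal_order_deg_three_sum_of_squares_general 3 p h g σ lam hp (by omega) hph
    hg S hS β hβ k hk C hC

end
end

section
/- Assume σ ≡ 1 (mod 2) and N_{Z/ℚ}(η) ≡ 1 (mod 2). Then for every k ≥ 2, every k×k matrix C with entries in the maximal order 𝔪 = I(λ) is a sum of squares of k×k matrices with entries in 𝔪. -/
/-!
Matrices over the maximal order `I(λ)` in a cyclic division algebra of degree `n = 3`
over `ℚ` are sums of squares, provided `σ ≡ 1 (mod 2)`.
-/

set_option synthInstance.maxHeartbeats 1000000

noncomputable section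

/-!
Let `I` be an additive group containing `1`. Matrices supported off the diagonal, the matrices
`E_ii (2 x)` and `E_ii`, and the matrices `E_ii [x, y]` are sums of squares of matrices over `I`, so
diagonal entries matter only modulo `2`, and it is enough that after inverting all odd integers `I`
is spanned by `1` and commutators. There `p` is invertible, hence so is `D(α)` because `β` divides
`p` in the ring of periods, and `I(λ)` becomes `∑ U ^ j A` with `A` spanned by the `D(η_s)`. Since
`U ^ n = σ` is a unit, the commutators `[U, U ^ (n - 1) D(η_s)]` identify all `D(η_s)`, and
`∑ η_s = -1` with `n` odd puts `A` into the span of `1` and commutators. For `0 < j < n` the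
identity `∑ η_s (η_s - η_{s + j}) = p` exhibits `p U ^ j a` as a sum of commutators with the
`D(η_s)`.
-/

section SumsOfSquares

open Matrix

variable {B ι : Type*} [Ring B] [DecidableEq ι] {I : AddSubgroup B}

lemma single_mem_matrix (i j : ι) {x : B} (hx : x ∈ I) : single i j x ∈ I.matrix := by
  intro a b
  rw [single_apply]
  split_ifs
  exacts [hx, I.zero_mem]

variable [Fintype ι]

/-- Finite sums of squares of `ι × ι` matrices with entries in the additive group `I`. As `I` need
not be closed under multiplication, such a sum may have entries outside `I`. -/
def matrixSumSq (ι : Type*) [Fintype ι] [DecidableEq ι] (I : AddSubgroup B) :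
    AddSubmonoid (Matrix ι ι B) :=
  AddSubmonoid.closure {M | ∃ A : Matrix ι ι B, A ∈ I.matrix ∧ M = A ^ 2}

lemma sq_mem_matrixSumSq {A : Matrix ι ι B} (hA : A ∈ I.matrix) : A ^ 2 ∈ matrixSumSq ι I :=
  AddSubmonoid.subset_closure ⟨A, hA, rfl⟩

lemma exists_eq_sum_sq_of_mem_matrixSumSq {C : Matrix ι ι B} (hC : C ∈ matrixSumSq ι I) :
    ∃ (m : ℕ) (A : Fin m → Matrix ι ι B), (∀ t i j, A t i j ∈ I) ∧ C = ∑ t, A t ^ 2 := by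
  obtain ⟨l, hl, rfl⟩ := AddSubmonoid.exists_list_of_mem_closure hC
  choose A hA hsq using fun t : Fin l.length => hl _ (l.get_mem t)
  refine ⟨l.length, A, hA, ?_⟩
  simp only [← hsq, List.get_eq_getElem, Fin.sum_univ_getElem]

lemma single_self_mul_add_single_self_mul_mem_matrixSumSq {i j : ι} (hij : i ≠ j) {x y : B}
    (hx : x ∈ I) (hy : y ∈ I) :
    single i i (x * y) + single j j (y * x) ∈ matrixSumSq ι I := by
  have hsq := sq_mem_matrixSumSq (add_mem (single_mem_matrix i j hx) (single_mem_matrix j i hy))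
  convert hsq using 1
  simp [sq, add_mul, mul_add, hij, hij.symm, add_comm]

variable (h1 : (1 : B) ∈ I)
include h1

lemma single_self_one_mem_matrixSumSq (i : ι) : single i i (1 : B) ∈ matrixSumSq ι I := by
  simpa [sq] using sq_mem_matrixSumSq (single_mem_matrix i i h1)

lemma single_self_neg_one_mem_matrixSumSq {i j : ι} (hij : i ≠ j) :
    single i i (-1 : B) ∈ matrixSumSq ι I := by
  have hmem := add_mem
    (single_self_mul_add_single_self_mul_mem_matrixSumSq hij h1 (neg_mem h1))
    (single_self_one_mem_matrixSumSq h1 j)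
  simpa [add_assoc, ← single_add] using hmem

lemma single_mem_matrixSumSq_of_ne {i j : ι} (hij : i ≠ j) {x : B} (hx : x ∈ I) :
    single i j x ∈ matrixSumSq ι I := by
  have hsq : (single i i 1 + single i j x) ^ 2 = single i i (1 : B) + single i j x := by
    simp [sq, add_mul, mul_add, hij.symm]
  have hmem := add_mem (single_self_neg_one_mem_matrixSumSq h1 hij)
    (sq_mem_matrixSumSq (add_mem (single_mem_matrix i i h1) (single_mem_matrix i j hx)))
  rw [hsq, ← add_assoc, ← single_add] at hmem
  simpa using hmem

lemma single_self_add_self_mem_matrixSumSq {i j : ι} (hij : i ≠ j) {x : B} (hx : x ∈ I) :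
    single i i (x + x) ∈ matrixSumSq ι I := by
  let A := single i i (1 + x) + single i j (-x) + (single j i x + single j j (-x))
  have hA : A ∈ I.matrix := add_mem
    (add_mem (single_mem_matrix i i (add_mem h1 hx)) (single_mem_matrix i j (neg_mem hx)))
    (add_mem (single_mem_matrix j i hx) (single_mem_matrix j j (neg_mem hx)))
  have hsq : A ^ 2 = single i i (1 + (x + x)) + single i j (-x) + single j i x := by
    ext a b
    simp only [A, sq, add_mul, mul_add, single_mul_single_same, hij, hij.symm, ne_eq,
      not_false_eq_true, single_mul_single_of_ne, add_zero, zero_add, Matrix.add_apply,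
      single_apply]
    split_ifs <;> first | noncomm_ring | simp
  have hmem := add_mem (add_mem (single_self_neg_one_mem_matrixSumSq h1 hij)
    (sq_mem_matrixSumSq hA)) (add_mem (single_mem_matrixSumSq_of_ne h1 hij hx)
      (single_mem_matrixSumSq_of_ne h1 hij.symm (neg_mem hx)))
  convert hmem using 1
  rw [hsq, single_add i i 1, ← single_neg, ← single_neg, ← single_neg]
  abel

omit h1 in
/-- The elements `x` of `I` such that every matrix unit `E_ii` times `x` is a sum of squares of
matrices over `I`. Closure under negation holds because `-x = x + 2 (-x)`, so that the hypotheses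
`1 ∈ I` and `Nontrivial ι` are part of the data. -/
def diagSumSq (ι : Type*) [Fintype ι] [DecidableEq ι] [Nontrivial ι] (h1 : (1 : B) ∈ I) :
    AddSubgroup B where
  carrier := {x | x ∈ I ∧ ∀ i : ι, single i i x ∈ matrixSumSq ι I}
  add_mem' hx hy := ⟨add_mem hx.1 hy.1, fun i => by
    rw [single_add]
    exact add_mem (hx.2 i) (hy.2 i)⟩
  zero_mem' := ⟨zero_mem _, fun i => by
    rw [single_zero]
    exact zero_mem _⟩
  neg_mem' {x} hx := ⟨neg_mem hx.1, fun i => by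
    obtain ⟨j, hji⟩ := exists_ne i
    have hmem := add_mem (hx.2 i) (single_self_add_self_mem_matrixSumSq h1 hji.symm (neg_mem hx.1))
    rwa [← single_add, add_neg_cancel_left] at hmem⟩

variable [Nontrivial ι]

lemma one_mem_diagSumSq : (1 : B) ∈ diagSumSq ι h1 :=
  ⟨h1, single_self_one_mem_matrixSumSq h1⟩

lemma add_self_mem_diagSumSq {x : B} (hx : x ∈ I) : x + x ∈ diagSumSq ι h1 :=
  ⟨add_mem hx hx, fun i =>
    let ⟨_, hji⟩ := exists_ne i
    single_self_add_self_mem_matrixSumSq h1 hji.symm hx⟩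

lemma mul_sub_mul_mem_diagSumSq {x y : B} (hx : x ∈ I) (hy : y ∈ I) (hxy : x * y ∈ I)
    (hyx : y * x ∈ I) : x * y - y * x ∈ diagSumSq ι h1 := by
  refine ⟨sub_mem hxy hyx, fun i => ?_⟩
  obtain ⟨j, hji⟩ := exists_ne i
  have hmem := add_mem (single_self_mul_add_single_self_mul_mem_matrixSumSq hji.symm hx hy)
    (single_self_mul_add_single_self_mul_mem_matrixSumSq hji.symm (neg_mem hyx) h1)
  convert hmem using 1
  rw [mul_one, one_mul, sub_eq_add_neg, single_add, ← single_neg, ← single_neg]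
  abel

lemma mem_diagSumSq_of_odd_zsmul_mem {x : B} (hx : x ∈ I) {q : ℤ} (hq : Odd q)
    (hqx : q • x ∈ diagSumSq ι h1) : x ∈ diagSumSq ι h1 := by
  obtain ⟨t, rfl⟩ := hq
  have hmem := sub_mem hqx (add_self_mem_diagSumSq (ι := ι) h1 (I.zsmul_mem hx t))
  rwa [add_smul, one_smul, mul_smul, two_smul, add_sub_cancel_left] at hmem

lemma mem_matrixSumSq_of_le_diagSumSq (hI : I ≤ diagSumSq ι h1) {C : Matrix ι ι B}
    (hC : C ∈ I.matrix) : C ∈ matrixSumSq ι I := by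
  rw [matrix_eq_sum_single C]
  refine sum_mem fun i _ => sum_mem fun j _ => ?_
  obtain rfl | hij := eq_or_ne i j
  · exact (hI (hC i i)).2 i
  · exact single_mem_matrixSumSq_of_ne h1 hij (hC i j)

end SumsOfSquares

section Commutators

variable {R B : Type*} [CommRing R] [Ring B] [Algebra R B]

/-- The submodule spanned by the commutators of elements of `M`. -/
def commutatorSpan (M : Submodule R B) : Submodule R B :=
  Submodule.span R {c | ∃ x ∈ M, ∃ y ∈ M, c = x * y - y * x}

lemma mul_sub_mul_mem_commutatorSpan {M : Submodule R B} {x y : B} (hx : x ∈ M) (hy : y ∈ M) :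
    x * y - y * x ∈ commutatorSpan M :=
  Submodule.subset_span ⟨x, hx, y, hy, rfl⟩

end Commutators

section OddDenominators

/-- The rational numbers with odd denominator, i.e. the localization of `ℤ` at the prime `2`. -/
def oddDenominators : Subring ℚ where
  carrier := {r | Odd r.den}
  mul_mem' {a b} ha hb := (Odd.mul ha hb).of_dvd_nat (Rat.mul_den_dvd a b)
  one_mem' := odd_one
  add_mem' {a b} ha hb := (Odd.mul ha hb).of_dvd_nat (Rat.add_den_dvd a b)
  zero_mem' := odd_one
  neg_mem' {a} ha := by simpa using ha

lemma isUnit_intCast_oddDenominators {q : ℤ} (hq : Odd q) : IsUnit (q : oddDenominators) := by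
  have hq0 : q ≠ 0 := by
    rintro rfl
    exact Int.not_odd_zero hq
  have hinv : (q : ℚ)⁻¹ ∈ oddDenominators := by
    change Odd (q : ℚ)⁻¹.den
    rwa [Rat.inv_intCast_den, if_neg hq0, Int.natAbs_odd]
  refine IsUnit.of_mul_eq_one ⟨_, hinv⟩ (Subtype.ext ?_)
  simp [hq0]

lemma isUnit_natCast_oddDenominators {m : ℕ} (hm : Odd m) : IsUnit (m : oddDenominators) := by
  exact_mod_cast isUnit_intCast_oddDenominators ((Int.odd_coe_nat m).mpr hm)

lemma exists_odd_mul_eq_intCast (r : oddDenominators) : ∃ q : ℤ, Odd q ∧ ∃ t : ℤ, q * r = t := by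
  refine ⟨(r : ℚ).den, by exact_mod_cast r.2, (r : ℚ).num, Subtype.ext ?_⟩
  simp [Rat.den_mul_eq_num]

variable {B ι : Type*} [Ring B] [Algebra ℚ B] [Fintype ι] [DecidableEq ι]

lemma exists_odd_zsmul_mem_of_mem_span {G : AddSubgroup B} {x : B}
    (hx : x ∈ Submodule.span oddDenominators (G : Set B)) : ∃ q : ℤ, Odd q ∧ q • x ∈ G := by
  induction hx using Submodule.span_induction with
  | mem x hx => exact ⟨1, odd_one, by rwa [one_smul]⟩
  | zero => exact ⟨1, odd_one, by simp⟩
  | add x y _ _ ihx ihy =>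
    obtain ⟨q, hq, hqx⟩ := ihx
    obtain ⟨r, hr, hry⟩ := ihy
    refine ⟨q * r, hq.mul hr, ?_⟩
    rw [smul_add, mul_comm, mul_smul, mul_comm, mul_smul]
    exact add_mem (G.zsmul_mem hqx r) (G.zsmul_mem hry q)
  | smul a x _ ih =>
    obtain ⟨q, hq, hqx⟩ := ih
    obtain ⟨r, hr, t, hrt⟩ := exists_odd_mul_eq_intCast a
    refine ⟨q * r, hq.mul hr, ?_⟩
    have hsmul : (q * r) • a • x = t • q • x := by
      rw [← Int.cast_smul_eq_zsmul oddDenominators (q * r), smul_smul, Int.cast_mul, mul_assoc, hrt,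
        mul_comm, mul_smul, Int.cast_smul_eq_zsmul, Int.cast_smul_eq_zsmul]
    rw [hsmul]
    exact G.zsmul_mem hqx t

lemma mem_of_odd_zsmul_mem {M : Submodule oddDenominators B} {x : B} {q : ℤ} (hq : Odd q)
    (hqx : q • x ∈ M) : x ∈ M := by
  rw [← Int.cast_smul_eq_zsmul oddDenominators] at hqx
  exact (M.smul_mem_iff_of_isUnit (isUnit_intCast_oddDenominators hq)).mp hqx

variable [Nontrivial ι] {I : AddSubgroup B} (h1 : (1 : B) ∈ I) {M : Submodule oddDenominators B}
  (hspan : Submodule.span oddDenominators (I : Set B) = M) (hmul : M * M ≤ M)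
include hspan hmul

lemma mul_sub_mul_mem_span_diagSumSq {x y : B} (hx : x ∈ M) (hy : y ∈ M) :
    x * y - y * x ∈ Submodule.span oddDenominators (diagSumSq ι h1 : Set B) := by
  have exists_zsmul {z : B} (hz : z ∈ M) : ∃ q : ℤ, Odd q ∧ q • z ∈ I :=
    exists_odd_zsmul_mem_of_mem_span (hspan.symm ▸ hz)
  obtain ⟨q, hq, hqx⟩ := exists_zsmul hx
  obtain ⟨r, hr, hry⟩ := exists_zsmul hy
  obtain ⟨s, hs, hsxy⟩ := exists_zsmul (hmul (Submodule.mul_mem_mul hx hy))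
  obtain ⟨t, ht, htyx⟩ := exists_zsmul (hmul (Submodule.mul_mem_mul hy hx))
  have hleft : (s * t) • q • x * r • y = (t * (q * r)) • s • (x * y) := by
    simp only [smul_mul_assoc, mul_smul_comm, smul_smul]
    ring_nf
  have hright : r • y * (s * t) • q • x = (s * (q * r)) • t • (y * x) := by
    simp only [smul_mul_assoc, mul_smul_comm, smul_smul]
    ring_nf
  have hmem := mul_sub_mul_mem_diagSumSq (ι := ι) h1 (I.zsmul_mem hqx (s * t)) hry
    (hleft ▸ I.zsmul_mem hsxy _) (hright ▸ I.zsmul_mem htyx _)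
  refine mem_of_odd_zsmul_mem (hs.mul (ht.mul (hq.mul hr))) (Submodule.subset_span ?_)
  rw [SetLike.mem_coe]
  convert hmem using 1
  rw [hleft, hright, smul_sub, smul_smul, smul_smul]
  ring_nf

lemma le_diagSumSq_of_le_one_sup_commutatorSpan (hM : M ≤ 1 ⊔ commutatorSpan M) :
    I ≤ diagSumSq ι h1 := by
  have hle : M ≤ Submodule.span oddDenominators (diagSumSq ι h1 : Set B) := by
    refine hM.trans (sup_le ?_ (Submodule.span_le.mpr ?_))
    · exact Submodule.one_le.mpr (Submodule.subset_span (one_mem_diagSumSq h1))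
    · rintro _ ⟨x, hx, y, hy, rfl⟩
      exact mul_sub_mul_mem_span_diagSumSq h1 hspan hmul hx hy
  intro x hx
  obtain ⟨q, hq, hqx⟩ :=
    exists_odd_zsmul_mem_of_mem_span (hle (hspan ▸ Submodule.subset_span hx))
  exact mem_diagSumSq_of_odd_zsmul_mem h1 hx hq hqx

end OddDenominators

section OrderedMonoid

variable {M : Type*} [Monoid M] [PartialOrder M] [MulLeftMono M] [MulRightMono M] {A W : M}

lemma mul_pow_le_pow_mul_of_mul_le (hAW : A * W ≤ W * A) (m : ℕ) : A * W ^ m ≤ W ^ m * A := by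
  induction m with
  | zero => simp
  | succ m ih =>
    calc A * W ^ (m + 1) = A * W ^ m * W := by rw [pow_succ, mul_assoc]
      _ ≤ W ^ m * (A * W) := by rw [← mul_assoc]; gcongr
      _ ≤ W ^ m * (W * A) := by gcongr
      _ = W ^ (m + 1) * A := by rw [pow_succ, mul_assoc]

lemma pow_mul_mul_pow_mul_le (hA : A * A = A) (hAW : A * W ≤ W * A) (i j : ℕ) :
    W ^ i * A * (W ^ j * A) ≤ W ^ (i + j) * A :=
  calc W ^ i * A * (W ^ j * A) = W ^ i * (A * W ^ j) * A := by simp only [mul_assoc]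
    _ ≤ W ^ i * (W ^ j * A) * A := by
      gcongr W ^ i * ?_ * A
      exact mul_pow_le_pow_mul_of_mul_le hAW j
    _ = W ^ (i + j) * A := by rw [mul_assoc, mul_assoc (W ^ j), hA, pow_add, mul_assoc]

lemma mul_pow_mul_eq_pow_mul (h1 : 1 ≤ A) (hA : A * A = A) (hAW : A * W ≤ W * A) (m : ℕ) :
    (W * A) ^ m * A = W ^ m * A := by
  refine le_antisymm ?_ ?_
  · induction m with
    | zero => simp
    | succ m ih =>
      calc (W * A) ^ (m + 1) * A = W ^ 1 * A * ((W * A) ^ m * A) := by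
            rw [pow_succ', pow_one, mul_assoc]
        _ ≤ W ^ 1 * A * (W ^ m * A) := by gcongr
        _ ≤ W ^ (m + 1) * A := add_comm 1 m ▸ pow_mul_mul_pow_mul_le hA hAW 1 m
  · gcongr
    exact le_mul_of_one_le_right' h1

lemma pow_mul_eq_pow_mul_of_mul_eq {V : M} (h1 : 1 ≤ A) (hA : A * A = A) (hAW : A * W ≤ W * A)
    (hVW : V * A = W * A) (m : ℕ) : V ^ m * A = W ^ m * A := by
  have hAV : A * V ≤ V * A :=
    calc A * V ≤ A * (V * A) := by
          gcongr
          exact le_mul_of_one_le_right' h1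
      _ = A * W * A := by rw [hVW, mul_assoc]
      _ ≤ W * A * A := by gcongr
      _ = V * A := by rw [mul_assoc, hA, hVW]
  rw [← mul_pow_mul_eq_pow_mul h1 hA hAV, hVW, mul_pow_mul_eq_pow_mul h1 hA hAW]

lemma pow_add_le_of_pow_succ_le {m : ℕ} (hW : W ^ (m + 1) ≤ W ^ m) (k : ℕ) :
    W ^ (m + k) ≤ W ^ m := by
  induction k with
  | zero => rfl
  | succ k ih =>
    calc W ^ (m + (k + 1)) = W ^ (m + k) * W := by rw [← add_assoc, pow_succ]
      _ ≤ W ^ m * W := by gcongr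
      _ ≤ W ^ m := by rwa [← pow_succ]

end OrderedMonoid

section PowerModule

open Submodule

variable {R B : Type*} [CommRing R] [Ring B] [Algebra R B]

/-- The submodule `∑_{j ≤ m} X ^ j A`. -/
def powModule (A : Subalgebra R B) (X : B) (m : ℕ) : Submodule R B :=
  span R {1, X} ^ m * Subalgebra.toSubmodule A

lemma span_one_self_pow (X : B) (m : ℕ) :
    span R {1, X} ^ m = span R ((fun j => X ^ j) '' Set.Iic m) := by
  induction m with
  | zero => rw [← Nat.bot_eq_zero, Set.Iic_bot, Nat.bot_eq_zero]; simp [one_eq_span]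
  | succ m ih =>
    rw [pow_succ, ih, span_mul_span]
    refine le_antisymm (span_mono ?_) (span_mono ?_)
    · rintro _ ⟨_, ⟨j, hj, rfl⟩, y, rfl | rfl, rfl⟩
      · exact ⟨j, hj.trans m.le_succ, (mul_one _).symm⟩
      · exact ⟨j + 1, Nat.succ_le_succ hj, pow_succ _ _⟩
    · rintro _ ⟨j, hj, rfl⟩
      rcases j with _ | j
      · exact ⟨1, ⟨0, m.zero_le, pow_zero X⟩, 1, by simp⟩
      · exact ⟨X ^ j, ⟨j, Nat.le_of_succ_le_succ hj, rfl⟩, X, by simp, (pow_succ _ _).symm⟩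

variable {A : Subalgebra R B} {X U : B} {m : ℕ}

lemma pow_mul_mem_powModule {j : ℕ} (hj : j ≤ m) {a : B} (ha : a ∈ A) :
    X ^ j * a ∈ powModule A X m := by
  rw [powModule, span_one_self_pow]
  exact mul_mem_mul (subset_span ⟨j, hj, rfl⟩) ha

lemma powModule_le {T : Submodule R B} (hT : ∀ j ≤ m, ∀ a ∈ A, X ^ j * a ∈ T) :
    powModule A X m ≤ T := by
  rw [powModule, span_one_self_pow, ← span_eq (Subalgebra.toSubmodule A), span_mul_span, span_le]
  rintro _ ⟨_, ⟨j, hj, rfl⟩, a, ha, rfl⟩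
  exact hT j hj a ha

lemma powModule_eq_span {ι : Type*} {e : ι → B}
    (hA : Subalgebra.toSubmodule A = span R (Set.range e)) :
    powModule A X m = span R {x | ∃ j ≤ m, ∃ s, x = X ^ j * e s} := by
  rw [powModule, span_one_self_pow, hA, span_mul_span]
  congr 1
  ext x
  constructor
  · rintro ⟨_, ⟨j, hj, rfl⟩, _, ⟨s, rfl⟩, rfl⟩
    exact ⟨j, hj, s, rfl⟩
  · rintro ⟨j, hj, s, rfl⟩
    exact ⟨_, ⟨j, hj, rfl⟩, _, ⟨s, rfl⟩, rfl⟩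

lemma toSubmodule_mul_span_le {e : ℕ → B}
    (hA : Subalgebra.toSubmodule A = span R (Set.range e)) (heU : ∀ s, e s * U = U * e (s + 1)) :
    Subalgebra.toSubmodule A * span R {1, U} ≤ span R {1, U} * Subalgebra.toSubmodule A := by
  rw [hA, span_mul_span, span_mul_span]
  refine span_mono ?_
  rintro _ ⟨_, ⟨s, rfl⟩, _, rfl | rfl, rfl⟩
  · exact ⟨1, by simp, e s, ⟨s, rfl⟩, by simp⟩
  · exact ⟨_, by simp, e (s + 1), ⟨s + 1, rfl⟩, (heU s).symm⟩

lemma span_one_self_mul_le {V : B}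
    (hV : V ∈ span R {1, U} * Subalgebra.toSubmodule A) :
    span R {1, V} * Subalgebra.toSubmodule A ≤ span R {1, U} * Subalgebra.toSubmodule A := by
  have hle : span R {1, V} ≤ span R {1, U} * Subalgebra.toSubmodule A := by
    rw [span_le]
    rintro _ (rfl | rfl)
    · exact mul_one (1 : B) ▸ mul_mem_mul (subset_span (by simp)) A.one_mem
    · exact hV
  calc span R {1, V} * Subalgebra.toSubmodule A
      ≤ span R {1, U} * Subalgebra.toSubmodule A * Subalgebra.toSubmodule A := by gcongr
    _ = span R {1, U} * Subalgebra.toSubmodule A := by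
        rw [mul_assoc, A.isIdempotentElem_toSubmodule]

lemma span_one_self_mul_eq_of_unit_affine {l r : R} {a c : B} (hr : IsUnit r) (ha : a ∈ A)
    (hc : c ∈ A) (hac : a * c = 1) :
    span R {1, r • ((algebraMap R B l - U) * a)} * Subalgebra.toSubmodule A =
      span R {1, U} * Subalgebra.toSubmodule A := by
  have h1 (V : B) : (1 : B) ∈ span R {1, V} := subset_span (by simp)
  have hself (V : B) : V ∈ span R {1, V} := subset_span (by simp)
  have hscalar (V : B) : algebraMap R B l ∈ span R {1, V} :=
    Algebra.algebraMap_eq_smul_one (A := B) l ▸ smul_mem _ l (h1 V)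
  refine le_antisymm (span_one_self_mul_le ?_) (span_one_self_mul_le ?_)
  · exact smul_mem _ r (mul_mem_mul (sub_mem (hscalar U) (hself U)) ha)
  · obtain ⟨u, rfl⟩ := hr
    set V := (u : R) • ((algebraMap R B l - U) * a) with hV
    have hU : U = algebraMap R B l * 1 - (↑u⁻¹ : R) • (V * c) := by
      rw [hV, smul_mul_assoc, mul_assoc, hac, mul_one, smul_smul, Units.inv_mul, one_smul, mul_one,
        sub_sub_cancel]
    rw [hU]
    exact sub_mem (mul_mem_mul (hscalar V) A.one_mem) (smul_mem _ _ (mul_mem_mul (hself V) hc))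

lemma span_one_self_pow_le_of_pow_succ_eq {c : R} (hU : U ^ (m + 1) = algebraMap R B c) :
    span R {1, U} ^ (m + 1) ≤ span R {1, U} ^ m := by
  rw [span_one_self_pow, span_one_self_pow, span_le]
  rintro _ ⟨j, hj, rfl⟩
  obtain hj | rfl := Nat.le_or_eq_of_le_succ hj
  · exact subset_span ⟨j, hj, rfl⟩
  · change U ^ (m + 1) ∈ _
    rw [hU, Algebra.algebraMap_eq_smul_one]
    exact smul_mem _ _ (subset_span ⟨0, m.zero_le, pow_zero U⟩)

lemma powModule_mul_self_le {c : R} (hU : U ^ (m + 1) = algebraMap R B c)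
    (hAU : Subalgebra.toSubmodule A * span R {1, U} ≤ span R {1, U} * Subalgebra.toSubmodule A) :
    powModule A U m * powModule A U m ≤ powModule A U m :=
  calc powModule A U m * powModule A U m
      ≤ span R {1, U} ^ (m + m) * Subalgebra.toSubmodule A :=
        pow_mul_mul_pow_mul_le A.isIdempotentElem_toSubmodule hAU m m
    _ ≤ powModule A U m := by
        unfold powModule
        gcongr ?_ * _
        exact pow_add_le_of_pow_succ_le (span_one_self_pow_le_of_pow_succ_eq hU) m

lemma powModule_unit_affine {l r : R} {a c : B} (hr : IsUnit r) (ha : a ∈ A) (hc : c ∈ A)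
    (hac : a * c = 1)
    (hAU : Subalgebra.toSubmodule A * span R {1, U} ≤ span R {1, U} * Subalgebra.toSubmodule A) :
    powModule A (r • ((algebraMap R B l - U) * a)) m = powModule A U m :=
  pow_mul_eq_pow_mul_of_mul_eq (one_le.mpr A.one_mem) A.isIdempotentElem_toSubmodule hAU
    (span_one_self_mul_eq_of_unit_affine hr ha hc hac) m

end PowerModule

section CommutatorGeneration

open Finset

lemma mul_pow_eq_pow_mul_add {B : Type*} [Monoid B] {U : B} {e : ℕ → B}
    (heU : ∀ s, e s * U = U * e (s + 1)) (s j : ℕ) : e s * U ^ j = U ^ j * e (s + j) := by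
  induction j with
  | zero => simp
  | succ j ih => rw [pow_succ, ← mul_assoc, ih, mul_assoc, heU, mul_assoc, add_assoc]

variable {R B : Type*} [CommRing R] [Ring B] [Algebra R B] {A : Subalgebra R B} {U : B} {m : ℕ}
  {e : ℕ → B} (hA : Subalgebra.toSubmodule A = Submodule.span R (Set.range e))
  (heU : ∀ s, e s * U = U * e (s + 1))
include hA

lemma mem_of_toSubmodule_eq_span_range (s : ℕ) : e s ∈ A := by
  rw [← Subalgebra.mem_toSubmodule, hA]
  exact Submodule.subset_span ⟨s, rfl⟩

include heU

lemma sub_succ_mem_commutatorSpan (hm : m ≠ 0) {c : R} (hc : IsUnit c)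
    (hU : U ^ (m + 1) = algebraMap R B c) (s : ℕ) :
    e s - e (s + 1) ∈ commutatorSpan (powModule A U m) := by
  have hUmem : U ∈ powModule A U m := by
    simpa using pow_mul_mem_powModule (X := U) (Nat.one_le_iff_ne_zero.mpr hm) A.one_mem
  have hcomm : U * (U ^ m * e s) - U ^ m * e s * U = c • (e s - e (s + 1)) := by
    rw [mul_assoc, heU, ← mul_assoc, ← mul_assoc, ← pow_succ', ← pow_succ, hU, ← mul_sub,
      Algebra.smul_def]
  rw [← Submodule.smul_mem_iff_of_isUnit _ hc, ← hcomm]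
  exact mul_sub_mul_mem_commutatorSpan hUmem
    (pow_mul_mem_powModule le_rfl (mem_of_toSubmodule_eq_span_range hA s))

lemma zero_sub_mem_commutatorSpan (hm : m ≠ 0) {c : R} (hc : IsUnit c)
    (hU : U ^ (m + 1) = algebraMap R B c) (s : ℕ) :
    e 0 - e s ∈ commutatorSpan (powModule A U m) := by
  induction s with
  | zero => simp
  | succ s ih =>
    rw [← sub_add_sub_cancel _ (e s)]
    exact add_mem ih (sub_succ_mem_commutatorSpan hA heU hm hc hU s)

lemma toSubmodule_le_one_sup_commutatorSpan (hm : m ≠ 0) {c : R} (hc : IsUnit c)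
    (hU : U ^ (m + 1) = algebraMap R B c) (hn : IsUnit ((m + 1 : ℕ) : R))
    (hsum : ∑ s ∈ range (m + 1), e s = -1) :
    Subalgebra.toSubmodule A ≤ 1 ⊔ commutatorSpan (powModule A U m) := by
  have hdiff (s : ℕ) : e 0 - e s ∈ 1 ⊔ commutatorSpan (powModule A U m) :=
    Submodule.mem_sup_right (zero_sub_mem_commutatorSpan hA heU hm hc hU s)
  have hzero : e 0 ∈ 1 ⊔ commutatorSpan (powModule A U m) := by
    have hsmul : ((m + 1 : ℕ) : R) • e 0 = ∑ s ∈ range (m + 1), (e 0 - e s) + -1 := by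
      rw [sum_sub_distrib, hsum, sum_const, card_range, Nat.cast_smul_eq_nsmul, sub_neg_eq_add,
        add_neg_cancel_right]
    rw [← Submodule.smul_mem_iff_of_isUnit _ hn, hsmul]
    exact add_mem (sum_mem fun s _ => hdiff s)
      (neg_mem (Submodule.mem_sup_left (Submodule.one_le.mp le_rfl)))
  rw [hA, Submodule.span_le]
  rintro _ ⟨s, rfl⟩
  exact sub_sub_cancel (e 0) (e s) ▸ sub_mem hzero (hdiff s)

lemma pow_mul_mem_commutatorSpan [IsMulCommutative A] {d : R} (hd : IsUnit d) {t : Finset ℕ}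
    {j : ℕ} (hj : j ≤ m)
    (hdual : ∑ s ∈ t, e s * (e s - e (s + j)) = algebraMap R B d) {a : B} (ha : a ∈ A) :
    U ^ j * a ∈ commutatorSpan (powModule A U m) := by
  have he := mem_of_toSubmodule_eq_span_range hA
  have hterm (s : ℕ) :
      U ^ j * (a * e s) * e s - e s * (U ^ j * (a * e s)) =
        U ^ j * a * (e s * (e s - e (s + j))) := by
    have hswap : e (s + j) * (a * e s) = a * (e s * e (s + j)) := by
      rw [setLike_mul_comm (he _) (mul_mem ha (he s)), mul_assoc]
    rw [← mul_assoc (e s), mul_pow_eq_pow_mul_add heU, mul_assoc (U ^ j) (e (s + j)), hswap]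
    noncomm_ring
  have hsmul : d • (U ^ j * a) =
      ∑ s ∈ t, (U ^ j * (a * e s) * e s - e s * (U ^ j * (a * e s))) := by
    simp only [hterm, ← mul_sum, hdual, Algebra.smul_def, Algebra.commutes]
  rw [← Submodule.smul_mem_iff_of_isUnit _ hd, hsmul]
  refine sum_mem fun s _ => mul_sub_mul_mem_commutatorSpan
    (pow_mul_mem_powModule hj (mul_mem ha (he s))) ?_
  simpa using pow_mul_mem_powModule (X := U) m.zero_le (he s)

theorem powModule_le_one_sup_commutatorSpan [IsMulCommutative A] (hm : m ≠ 0) {c d : R}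
    (hc : IsUnit c) (hd : IsUnit d) (hn : IsUnit ((m + 1 : ℕ) : R))
    (hU : U ^ (m + 1) = algebraMap R B c) (hsum : ∑ s ∈ range (m + 1), e s = -1)
    (hdual : ∀ j ≠ 0, j < m + 1 →
      ∑ s ∈ range (m + 1), e s * (e s - e (s + j)) = algebraMap R B d) :
    powModule A U m ≤ 1 ⊔ commutatorSpan (powModule A U m) := by
  refine powModule_le fun j hj a ha => ?_
  obtain rfl | hj0 := j.eq_zero_or_pos
  · rw [pow_zero, one_mul]
    exact toSubmodule_le_one_sup_commutatorSpan hA heU hm hc hU hn hsum ha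
  · exact Submodule.mem_sup_right
      (pow_mul_mem_commutatorSpan hA heU hd hj (hdual j hj0.ne' (Nat.lt_succ_of_le hj)) ha)

end CommutatorGeneration

section RangeProducts

open Finset

variable {M : Type*} [CommMonoid M]

@[to_additive sum_range_mul_eq_sum_sum]
lemma prod_range_mul_eq_prod_prod (f : ℕ → M) (n h : ℕ) :
    ∏ i ∈ range (n * h), f i = ∏ s ∈ range n, ∏ r ∈ range h, f (n * r + s) := by
  induction h with
  | zero => simp
  | succ h ih => simp only [Nat.mul_succ, prod_range_add, ih, prod_range_succ, prod_mul_distrib]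

@[to_additive]
lemma prod_range_add_of_periodic {f : ℕ → M} {h : ℕ} (hf : f.Periodic h) (t : ℕ) :
    ∏ r ∈ range h, f (r + t) = ∏ r ∈ range h, f r := by
  induction t with
  | zero => rfl
  | succ t ih =>
    rw [← ih]
    rcases h with _ | h
    · rfl
    rw [prod_range_succ, prod_range_succ' fun r => f (r + t)]
    congr 1
    · exact prod_congr rfl fun r _ => by rw [add_right_comm, add_assoc]
    · rw [← hf (0 + t)]
      congr 1
      ring

end RangeProducts

section PrimitiveRootPowers

open Finset

variable {F : Type*} [Field F] {g : F} {n h : ℕ}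

lemma periodic_apply_pow_mul_add (hg : orderOf g = n * h) {M : Type*} (f : F → M) (s : ℕ) :
    (fun r => f (g ^ (n * r + s))).Periodic h := fun r => by
  simp only [mul_add, add_right_comm, pow_add, ← hg, pow_orderOf_eq_one, mul_one]

lemma pow_injOn_range_orderOf (hg : orderOf g = n * h) :
    Set.InjOn (fun i : ℕ => g ^ i) (range (n * h)) := by
  simpa [hg] using pow_injOn_Iio_orderOf (x := g)

lemma one_add_pow_eq_zero_iff (hg : orderOf g = n * h) {c : ℕ} (hc : c < h)
    (hgc : g ^ (n * c) = -1) {j r : ℕ} (hj : j < n) (hr : r < h) :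
    1 + g ^ (n * r + j) = 0 ↔ j = 0 ∧ r = c := by
  have hlt : n * r + j < n * h := by nlinarith
  have hlt' : n * c < n * h := by nlinarith
  rw [add_comm, add_eq_zero_iff_eq_neg, ← hgc,
    (pow_injOn_range_orderOf hg).eq_iff (by simpa using hlt) (by simpa using hlt')]
  constructor
  · intro heq
    have hj0 : j = 0 := by
      simpa [Nat.add_mod, Nat.mod_eq_of_lt hj] using congrArg (· % n) heq
    subst hj0
    exact ⟨rfl, Nat.eq_of_mul_eq_mul_left hj heq⟩
  · rintro ⟨rfl, rfl⟩
    rfl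

variable [Fintype F] (hF : Fintype.card F = n * h + 1) (hg : orderOf g = n * h)
include hF hg

lemma ne_zero_of_orderOf_eq_card_sub_one : g ≠ 0 := by
  rintro rfl
  have hcard := Fintype.one_lt_card (α := F)
  rw [orderOf_zero] at hg
  omega

lemma image_pow_range_eq_compl_zero [DecidableEq F] : (range (n * h)).image (g ^ ·) = {0}ᶜ := by
  refine eq_of_subset_of_card_le ?_ ?_
  · intro x hx
    obtain ⟨i, _, rfl⟩ := mem_image.mp hx
    simpa using fun h => (ne_zero_of_orderOf_eq_card_sub_one hF hg h).elim
  · rw [card_image_of_injOn (pow_injOn_range_orderOf hg), card_compl, hF]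
    simp

lemma prod_compl_zero_eq_prod_prod_pow [DecidableEq F] {M : Type*} [CommMonoid M] (f : F → M) :
    ∏ x ∈ {0}ᶜ, f x = ∏ s ∈ range n, ∏ r ∈ range h, f (g ^ (n * r + s)) := by
  rw [← image_pow_range_eq_compl_zero hF hg, prod_image (pow_injOn_range_orderOf hg),
    prod_range_mul_eq_prod_prod fun i => f (g ^ i)]

lemma sum_eq_add_sum_sum_pow {M : Type*} [AddCommMonoid M] (f : F → M) :
    ∑ x, f x = f 0 + ∑ s ∈ range n, ∑ r ∈ range h, f (g ^ (n * r + s)) := by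
  classical
  rw [Fintype.sum_eq_add_sum_compl 0, ← image_pow_range_eq_compl_zero hF hg,
    sum_image (pow_injOn_range_orderOf hg), sum_range_mul_eq_sum_sum fun i => f (g ^ i)]

lemma exists_lt_pow_mul_eq_neg_one (hn : Odd n) : ∃ r < h, g ^ (n * r) = -1 := by
  classical
  have hneg : (-1 : F) ∈ (range (n * h)).image (g ^ ·) := by
    simp [image_pow_range_eq_compl_zero hF hg]
  obtain ⟨i, hi, hgi⟩ := mem_image.mp hneg
  have hh : 0 < h := Nat.pos_of_ne_zero (by rintro rfl; simp at hi)
  refine ⟨i % h, Nat.mod_lt i hh, ?_⟩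
  rw [← Nat.mul_mod_mul_left, ← hg, pow_mod_orderOf, mul_comm, pow_mul, hgi, hn.neg_one_pow]

end PrimitiveRootPowers

section GaussianPeriods

open Finset

variable {F K : Type*} [Field F] [CommRing K]

/-- The Gaussian period `η_s`, for an arbitrary additive character in place of `x ↦ ζ ^ x`. -/
def addCharPeriod (ψ : AddChar F K) (g : F) (n h s : ℕ) : K :=
  ∑ r ∈ range h, ψ (g ^ (n * r + s))

variable {ψ : AddChar F K} {g : F} {n h : ℕ} (hg : orderOf g = n * h)
include hg

lemma addCharPeriod_add_self (s : ℕ) : addCharPeriod ψ g n h (s + n) = addCharPeriod ψ g n h s := by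
  unfold addCharPeriod
  rw [← sum_range_add_of_periodic (periodic_apply_pow_mul_add hg ψ s) 1]
  exact sum_congr rfl fun r _ => by rw [mul_add, mul_one, add_right_comm, add_assoc]

lemma addCharPeriod_mul_addCharPeriod_add (s j : ℕ) :
    addCharPeriod ψ g n h s * addCharPeriod ψ g n h (s + j) =
      ∑ t ∈ range h, ∑ r ∈ range h, ψ (g ^ (n * r + s) * (1 + g ^ (n * t + j))) := by
  rw [addCharPeriod, addCharPeriod, sum_mul, sum_comm]
  refine sum_congr rfl fun r _ => ?_
  rw [← sum_range_add_of_periodic (periodic_apply_pow_mul_add hg ψ (s + j)) r, mul_sum]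
  refine sum_congr rfl fun t _ => ?_
  rw [← AddChar.map_add_eq_mul, mul_add (g ^ _), mul_one, ← pow_add]
  ring_nf

variable [Fintype F] [IsDomain K] (hF : Fintype.card F = n * h + 1) (hψ : ψ.IsPrimitive)
include hF hψ

lemma sum_sum_addChar_pow_mul [DecidableEq F] (b : F) :
    ∑ s ∈ range n, ∑ r ∈ range h, ψ (g ^ (n * r + s) * b) =
      (if b = 0 then (Fintype.card F : K) else 0) - 1 := by
  have hsum := sum_eq_add_sum_sum_pow hF hg fun x => ψ (x * b)
  rw [AddChar.sum_mulShift b hψ, zero_mul, AddChar.map_zero_eq_one] at hsum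
  rw [eq_sub_iff_add_eq', ← hsum]
  push_cast
  rfl

lemma sum_addCharPeriod : ∑ s ∈ range n, addCharPeriod ψ g n h s = -1 := by
  classical
  simpa [addCharPeriod] using sum_sum_addChar_pow_mul hg hF hψ 1

lemma sum_addCharPeriod_mul_addCharPeriod_add (hn : Odd n) {j : ℕ} (hj : j < n) :
    ∑ s ∈ range n, addCharPeriod ψ g n h s * addCharPeriod ψ g n h (s + j) =
      (if j = 0 then (Fintype.card F : K) else 0) - h := by
  classical
  obtain ⟨c, hc, hgc⟩ := exists_lt_pow_mul_eq_neg_one hF hg hn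
  calc ∑ s ∈ range n, addCharPeriod ψ g n h s * addCharPeriod ψ g n h (s + j)
      = ∑ t ∈ range h, ((if 1 + g ^ (n * t + j) = 0 then (Fintype.card F : K) else 0) - 1) := by
        simp only [addCharPeriod_mul_addCharPeriod_add hg]
        rw [sum_comm]
        exact sum_congr rfl fun t _ => sum_sum_addChar_pow_mul hg hF hψ _
    _ = ∑ t ∈ range h, ((if j = 0 ∧ t = c then (Fintype.card F : K) else 0) - 1) :=
        sum_congr rfl fun t ht => by
          rw [if_congr (one_add_pow_eq_zero_iff hg hc hgc hj (mem_range.mp ht)) rfl rfl]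
    _ = (if j = 0 then (Fintype.card F : K) else 0) - h := by
        by_cases hj0 : j = 0 <;> simp [hj0, hc]

lemma sum_addCharPeriod_mul_sub (hn : Odd n) {j : ℕ} (hj0 : j ≠ 0) (hj : j < n) :
    ∑ s ∈ range n, addCharPeriod ψ g n h s *
      (addCharPeriod ψ g n h s - addCharPeriod ψ g n h (s + j)) = Fintype.card F := by
  have hself := sum_addCharPeriod_mul_addCharPeriod_add hg hF hψ hn (j := 0) (by omega)
  simp only [add_zero, if_true] at hself
  simp only [mul_sub, sum_sub_distrib, hself,
    sum_addCharPeriod_mul_addCharPeriod_add hg hF hψ hn hj, if_neg hj0]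
  ring

end GaussianPeriods

section PeriodRing

open Finset

variable {F K : Type*} [Field F] [CommRing K]

/-- The image in `K`, under `x ↦ ψ x`, of the elements of the integral group ring of `(F, +)` that
are invariant under multiplication by `u`. Working in the group ring makes the invariance
independent of linear relations between the values of `ψ`. -/
def periodRing (ψ : AddChar F K) (u : F) : Subring K :=
  (RingHom.eqLocus (AddMonoidAlgebra.mapDomainRingHom ℤ (AddMonoidHom.mulLeft u))
    (RingHom.id _)).map (AddMonoidAlgebra.lift ℤ K F ψ.toMonoidHom).toRingHom

variable {ψ : AddChar F K} {g : F} {n h : ℕ}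

lemma mapDomainRingHom_mulLeft_single_pow (g : F) (n r s : ℕ) :
    AddMonoidAlgebra.mapDomainRingHom ℤ (AddMonoidHom.mulLeft (g ^ n))
      (AddMonoidAlgebra.single (g ^ (n * r + s)) 1) =
        AddMonoidAlgebra.single (g ^ (n * (r + 1) + s)) 1 := by
  rw [AddMonoidAlgebra.mapDomainRingHom_apply, AddMonoidAlgebra.mapDomain_single,
    AddMonoidHom.coe_mulLeft, ← pow_add]
  ring_nf

section Generators

variable (hg : orderOf g = n * h)
include hg

lemma addCharPeriod_mem_periodRing (s : ℕ) : addCharPeriod ψ g n h s ∈ periodRing ψ (g ^ n) := by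
  refine ⟨∑ r ∈ range h, AddMonoidAlgebra.single (g ^ (n * r + s)) 1, ?_, ?_⟩
  · have hshift := sum_range_add_of_periodic
      (periodic_apply_pow_mul_add hg (fun x => AddMonoidAlgebra.single x (1 : ℤ)) s) 1
    change AddMonoidAlgebra.mapDomainRingHom ℤ _ _ = _
    simpa only [map_sum, RingHom.id_apply, mapDomainRingHom_mulLeft_single_pow] using hshift
  · simp [addCharPeriod, map_sum]

lemma prod_one_sub_mem_periodRing (s : ℕ) :
    ∏ r ∈ range h, (1 - ψ (g ^ (n * r + s))) ∈ periodRing ψ (g ^ n) := by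
  refine ⟨∏ r ∈ range h, (1 - AddMonoidAlgebra.single (g ^ (n * r + s)) 1), ?_, ?_⟩
  · have hshift := prod_range_add_of_periodic
      (periodic_apply_pow_mul_add hg (fun x => 1 - AddMonoidAlgebra.single x (1 : ℤ)) s) 1
    change AddMonoidAlgebra.mapDomainRingHom ℤ _ _ = _
    simpa only [map_prod, map_sub, map_one, RingHom.id_apply,
      mapDomainRingHom_mulLeft_single_pow] using hshift
  · simp [map_prod]

end Generators

lemma coeff_pow_mul_add_of_mapDomain_eq {f : AddMonoidAlgebra ℤ F} (hg0 : g ≠ 0)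
    (hf : AddMonoidAlgebra.mapDomainRingHom ℤ (AddMonoidHom.mulLeft (g ^ n)) f = f) (r s : ℕ) :
    f.coeff (g ^ (n * r + s)) = f.coeff (g ^ s) := by
  have hinv (x : F) : f.coeff (g ^ n * x) = f.coeff x := by
    conv_lhs => rw [← hf]
    exact Finsupp.mapDomain_apply (mul_right_injective₀ (pow_ne_zero n hg0)) f.coeff x
  induction r with
  | zero => simp
  | succ r ih => rw [mul_add, mul_one, add_comm (n * r), add_assoc, pow_add, hinv, ih]

lemma mem_span_addCharPeriod_of_mem_periodRing [Fintype F] [IsDomain K]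
    (hF : Fintype.card F = n * h + 1) (hg : orderOf g = n * h) (hψ : ψ.IsPrimitive) {x : K}
    (hx : x ∈ periodRing ψ (g ^ n)) : x ∈ Submodule.span ℤ (Set.range (addCharPeriod ψ g n h)) := by
  obtain ⟨f, hf, rfl⟩ := hx
  have hperiod (s : ℕ) :
      addCharPeriod ψ g n h s ∈ Submodule.span ℤ (Set.range (addCharPeriod ψ g n h)) :=
    Submodule.subset_span ⟨s, rfl⟩
  have hone : (1 : K) ∈ Submodule.span ℤ (Set.range (addCharPeriod ψ g n h)) := by
    rw [← neg_neg (1 : K), ← sum_addCharPeriod hg hF hψ]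
    exact neg_mem (sum_mem fun s _ => hperiod s)
  have heval : AddMonoidAlgebra.lift ℤ K F ψ.toMonoidHom f =
      f.coeff 0 • 1 + ∑ s ∈ range n, f.coeff (g ^ s) • addCharPeriod ψ g n h s := by
    rw [AddMonoidAlgebra.lift_apply, Finsupp.sum_fintype _ _ (by simp),
      sum_eq_add_sum_sum_pow hF hg]
    simp [addCharPeriod, smul_sum,
      coeff_pow_mul_add_of_mapDomain_eq (ne_zero_of_orderOf_eq_card_sub_one hF hg) hf]
  change AddMonoidAlgebra.lift ℤ K F ψ.toMonoidHom f ∈ _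
  rw [heval]
  exact add_mem (Submodule.smul_mem _ _ hone)
    (sum_mem fun s _ => Submodule.smul_mem _ _ (hperiod s))

lemma exists_mem_periodRing_prod_one_sub_mul_eq [Fintype F] [DecidableEq F]
    (hF : Fintype.card F = n * h + 1) (hg : orderOf g = n * h) :
    ∃ γ ∈ periodRing ψ (g ^ n), (∏ r ∈ range h, (1 - ψ (g ^ (n * r)))) * γ =
      ∏ x ∈ {0}ᶜ, (1 - ψ x) := by
  have hn : n ≠ 0 := by
    rintro rfl
    have hcard := Fintype.one_lt_card (α := F)
    omega
  obtain ⟨m, rfl⟩ := Nat.exists_eq_succ_of_ne_zero hn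
  refine ⟨∏ s ∈ range m, ∏ r ∈ range h, (1 - ψ (g ^ ((m + 1) * r + (s + 1)))),
    prod_mem fun s _ => prod_one_sub_mem_periodRing hg (s + 1), ?_⟩
  rw [prod_compl_zero_eq_prod_prod_pow hF hg, prod_range_succ', mul_comm]
  rfl

lemma prod_compl_zero_one_sub_zmodChar [IsDomain K] {p : ℕ} [NeZero p] {ζ : K}
    (hζ : IsPrimitiveRoot ζ p) :
    ∏ x ∈ ({0}ᶜ : Finset (ZMod p)), (1 - AddChar.zmodChar p hζ.pow_eq_one x) = p := by
  obtain ⟨m, rfl⟩ := Nat.exists_eq_succ_of_ne_zero (NeZero.ne p)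
  rw [Nat.cast_succ, ← hζ.prod_one_sub_pow_eq_order, ← Fin.prod_univ_eq_prod_range
    fun i => 1 - ζ ^ (i + 1)]
  change ∏ x ∈ ({0}ᶜ : Finset (Fin (m + 1))), _ = _
  rw [← Fin.image_succ_univ, prod_image (Fin.succ_injective m).injOn]
  rfl

end PeriodRing

section CyclicOrder

open Finset

lemma toSubmodule_adjoin_image {R Z B ι : Type*} [CommRing R] [Ring Z] [Ring B] [Algebra R B]
    (D : Z →+* B) {O : Subring Z} {η : ι → Z} (hη : ∀ s, η s ∈ O)
    (hO : ∀ x ∈ O, x ∈ Submodule.span ℤ (Set.range η)) :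
    Subalgebra.toSubmodule (Algebra.adjoin R (D '' O)) =
      Submodule.span R (Set.range fun s => D (η s)) := by
  have hclosure : (Submonoid.closure (D '' O) : Set B) = D '' O :=
    congrArg SetLike.coe (Submonoid.closure_eq (O.toSubmonoid.map D))
  rw [Algebra.adjoin_eq_span, hclosure]
  refine le_antisymm (Submodule.span_le.mpr ?_) (Submodule.span_mono ?_)
  · rintro _ ⟨x, hx, rfl⟩
    have hmap := Submodule.mem_map_of_mem (f := D.toAddMonoidHom.toIntLinearMap) (hO x hx)
    rw [Submodule.map_span, ← Set.range_comp] at hmap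
    exact Submodule.span_le_restrictScalars ℤ R _ hmap
  · rintro _ ⟨s, rfl⟩
    exact ⟨η s, hη s, rfl⟩

lemma isMulCommutative_adjoin_image {R Z B : Type*} [CommRing R] [CommRing Z] [Ring B]
    [Algebra R B] (D : Z →+* B) (O : Set Z) : IsMulCommutative (Algebra.adjoin R (D '' O)) := by
  refine Algebra.isMulCommutative_adjoin R ?_
  rintro _ ⟨x, _, rfl⟩ _ ⟨y, _, rfl⟩
  rw [← map_mul, mul_comm, map_mul]

/-- The additive group generated by the products `Y ^ j * e s` with `j ≤ m`. -/
def cyclicOrder {B ι : Type*} [Ring B] (Y : B) (e : ι → B) (m : ℕ) : AddSubgroup B :=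
  (Submodule.span ℤ {x | ∃ j ≤ m, ∃ s, x = Y ^ j * e s}).toAddSubgroup

lemma pow_mul_mem_cyclicOrder {B ι : Type*} [Ring B] {Y : B} {e : ι → B} {m j : ℕ} (hj : j ≤ m)
    (s : ι) : Y ^ j * e s ∈ cyclicOrder Y e m :=
  Submodule.subset_span ⟨j, hj, s, rfl⟩

lemma span_cyclicOrder {R B ι : Type*} [CommRing R] [Ring B] [Algebra R B] {A : Subalgebra R B}
    {e : ι → B} (hA : Subalgebra.toSubmodule A = Submodule.span R (Set.range e)) (Y : B) (m : ℕ) :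
    Submodule.span R (cyclicOrder Y e m : Set B) = powModule A Y m := by
  rw [powModule_eq_span hA]
  exact Submodule.span_span_of_tower ℤ R _

lemma one_mem_cyclicOrder {B ι : Type*} [Ring B] {e : ι → B} {t : Finset ι}
    (hsum : ∑ s ∈ t, e s = -1) (Y : B) (m : ℕ) : 1 ∈ cyclicOrder Y e m := by
  rw [← neg_neg (1 : B), ← hsum]
  refine neg_mem (sum_mem fun s _ => ?_)
  simpa using pow_mul_mem_cyclicOrder (Y := Y) m.zero_le s

lemma mem_cyclicOrder_iff_exists_sum {B : Type*} [Ring B] {Y : B} {e : ℕ → B} {m : ℕ}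
    (he : e.Periodic (m + 1)) {x : B} :
    x ∈ cyclicOrder Y e m ↔ ∃ c : Fin (m + 1) → Fin (m + 1) → ℤ,
      x = ∑ i : Fin (m + 1), ∑ s : Fin (m + 1), c i s • (Y ^ (i : ℕ) * e s) := by
  have hrange : {x | ∃ j ≤ m, ∃ s, x = Y ^ j * e s} =
      Set.range fun q : Fin (m + 1) × Fin (m + 1) => Y ^ (q.1 : ℕ) * e q.2 := by
    ext x
    constructor
    · rintro ⟨j, hj, s, rfl⟩
      refine ⟨⟨⟨j, Nat.lt_succ_of_le hj⟩, ⟨s % (m + 1), Nat.mod_lt s m.succ_pos⟩⟩, ?_⟩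
      rw [← he.map_mod_nat s]
    · rintro ⟨⟨j, s⟩, rfl⟩
      exact ⟨j, Nat.le_of_lt_succ j.2, s, rfl⟩
  rw [cyclicOrder, Submodule.mem_toAddSubgroup, hrange, Submodule.mem_span_range_iff_exists_fun]
  simp only [Fintype.sum_prod_type]
  constructor
  · rintro ⟨c, rfl⟩
    exact ⟨fun i s => c (i, s), rfl⟩
  · rintro ⟨c, rfl⟩
    exact ⟨fun q => c q.1 q.2, rfl⟩

section Localization

variable {Z B : Type*} [CommRing Z] [Ring B] [Algebra ℚ B] {D : Z →+* B} {O : Subring Z}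
  {η : ℕ → Z} {U Y : B} {m q : ℕ} (hη : ∀ s, η s ∈ O)
  (hO : ∀ x ∈ O, x ∈ Submodule.span ℤ (Set.range η)) (hDU : ∀ s, D (η s) * U = U * D (η (s + 1)))
  (hq : Odd q)
include hη hO hDU hq

lemma span_cyclicOrder_eq_powModule {l : ℤ} {a b : Z} {t : ℕ} (ht : Odd t) (ha : a ∈ O)
    (hb : b ∈ O) (hab : a * b = t) (hY : q * Y = (l - U) * D a) :
    Submodule.span oddDenominators (cyclicOrder Y (fun s => D (η s)) m : Set B) =
      powModule (Algebra.adjoin oddDenominators (D '' O)) U m := by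
  have hA := toSubmodule_adjoin_image (R := oddDenominators) D hη hO
  obtain ⟨r, hr⟩ := (isUnit_natCast_oddDenominators hq).exists_left_inv
  obtain ⟨u, hu⟩ := (isUnit_natCast_oddDenominators ht).exists_left_inv
  have hYr : Y = r • ((algebraMap oddDenominators B l - U) * D a) := by
    rw [map_intCast, ← hY, ← nsmul_eq_mul, ← Nat.cast_smul_eq_nsmul oddDenominators, smul_smul, hr,
      one_smul]
  have hinv : D a * (u • D b) = 1 := by
    rw [mul_smul_comm, ← map_mul, hab, map_natCast, ← nsmul_one,
      ← Nat.cast_smul_eq_nsmul oddDenominators, smul_smul, hu, one_smul]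
  rw [span_cyclicOrder hA, hYr]
  have hmem {x : Z} (hx : x ∈ O) : D x ∈ Algebra.adjoin oddDenominators (D '' O) :=
    Algebra.subset_adjoin ⟨x, hx, rfl⟩
  exact powModule_unit_affine (IsUnit.of_mul_eq_one _ hr) (hmem ha)
    (Subalgebra.smul_mem _ (hmem hb) u) hinv (toSubmodule_mul_span_le hA hDU)

variable {σ : ℕ} (hσ : Odd σ) (hm : m ≠ 0) (hn : Odd (m + 1)) (hU : U ^ (m + 1) = σ)
  (hsum : ∑ s ∈ range (m + 1), η s = -1)
  (hdual : ∀ j ≠ 0, j < m + 1 → ∑ s ∈ range (m + 1), η s * (η s - η (s + j)) = q)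
include hσ hm hn hU hsum hdual

lemma powModule_adjoin_image_le_one_sup_commutatorSpan :
    powModule (Algebra.adjoin oddDenominators (D '' O)) U m ≤
      1 ⊔ commutatorSpan (powModule (Algebra.adjoin oddDenominators (D '' O)) U m) := by
  have := isMulCommutative_adjoin_image (R := oddDenominators) D O
  refine powModule_le_one_sup_commutatorSpan (toSubmodule_adjoin_image D hη hO) hDU hm
    (isUnit_natCast_oddDenominators hσ) (isUnit_natCast_oddDenominators hq)
    (isUnit_natCast_oddDenominators hn) (by rw [hU, map_natCast]) ?_ fun j hj0 hj => ?_
  · rw [← map_sum, hsum, map_neg, map_one]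
  · simpa only [map_sum, map_mul, map_sub, map_natCast] using congrArg D (hdual j hj0 hj)

theorem mem_matrixSumSq_cyclicOrder {l : ℤ} {a b : Z} {t : ℕ} (ht : Odd t) (ha : a ∈ O)
    (hb : b ∈ O) (hab : a * b = t) (hY : q * Y = (l - U) * D a)
    {ι : Type*} [Fintype ι] [DecidableEq ι] [Nontrivial ι] {C : Matrix ι ι B}
    (hC : C ∈ (cyclicOrder Y (fun s => D (η s)) m).matrix) :
    C ∈ matrixSumSq ι (cyclicOrder Y (fun s => D (η s)) m) := by
  have hA := toSubmodule_adjoin_image (R := oddDenominators) D hη hO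
  have hone : 1 ∈ cyclicOrder Y (fun s => D (η s)) m :=
    one_mem_cyclicOrder (by rw [← map_sum, hsum, map_neg, map_one]) Y m
  have hmul := powModule_mul_self_le (hU.trans (map_natCast (algebraMap oddDenominators B) σ).symm)
    (toSubmodule_mul_span_le hA hDU)
  exact mem_matrixSumSq_of_le_diagSumSq hone (le_diagSumSq_of_le_one_sup_commutatorSpan hone
    (span_cyclicOrder_eq_powModule hη hO hDU hq ht ha hb hab hY) hmul
    (powModule_adjoin_image_le_one_sup_commutatorSpan hη hO hDU hq hσ hm hn hU hsum hdual)) hC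

end Localization

end CyclicOrder

section PeriodField

open Finset

variable {p : ℕ}

lemma isPrimitiveRoot_zetaC (hp : p ≠ 0) : IsPrimitiveRoot (zetaC p) p :=
  Complex.isPrimitiveRoot_exp p hp

/-- The additive character `x ↦ ζ ^ x` of `ℤ/p`. -/
def zetaChar (p : ℕ) [NeZero p] : AddChar (ZMod p) ℂ :=
  AddChar.zmodChar p (isPrimitiveRoot_zetaC (NeZero.ne p)).pow_eq_one

lemma zetaChar_natCast [NeZero p] (a : ℕ) : zetaChar p a = zetaC p ^ a :=
  AddChar.zmodChar_apply' _ a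

lemma isPrimitive_zetaChar [NeZero p] : (zetaChar p).IsPrimitive :=
  AddChar.zmodChar_primitive_of_primitive_root p (isPrimitiveRoot_zetaC (NeZero.ne p))

variable {n h g : ℕ} [Fact p.Prime]

lemma gaussPeriod_eq_addCharPeriod (s : ℕ) :
    gaussPeriod n p h g s = addCharPeriod (zetaChar p) (g : ZMod p) n h s := by
  simp only [gaussPeriod, addCharPeriod, ← zetaChar_natCast, Nat.cast_pow]

/-- The order of `Z` consisting of the elements whose image in `ℂ` lies in the period ring. -/
def periodOrder (n p h g : ℕ) [Fact p.Prime] : Subring (Zf n p h g) :=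
  (periodRing (zetaChar p) ((g : ZMod p) ^ n)).comap (algebraMap (Zf n p h g) ℂ)

variable (hg : orderOf (g : ZMod p) = n * h)
include hg

lemma mem_periodOrder_of_coe_eq_prod {β : Zf n p h g}
    (hβ : (β : ℂ) = ∏ r ∈ range h, (1 - zetaC p ^ g ^ (n * r))) : β ∈ periodOrder n p h g := by
  change (β : ℂ) ∈ periodRing _ _
  simpa only [hβ, ← zetaChar_natCast, Nat.cast_pow, add_zero] using
    prod_one_sub_mem_periodRing (ψ := zetaChar p) hg 0

section Conjugates

variable {η : ℕ → Zf n p h g} (hη : ∀ s, (η s : ℂ) = gaussPeriod n p h g s)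
include hη

lemma mem_periodOrder_of_coe_eq_gaussPeriod (s : ℕ) : η s ∈ periodOrder n p h g := by
  change (η s : ℂ) ∈ periodRing _ _
  rw [hη, gaussPeriod_eq_addCharPeriod]
  exact addCharPeriod_mem_periodRing hg s

lemma periodic_of_coe_eq_gaussPeriod : η.Periodic n := fun s =>
  Subtype.ext <| by
    rw [hη, hη, gaussPeriod_eq_addCharPeriod, gaussPeriod_eq_addCharPeriod,
      addCharPeriod_add_self hg]

variable (hph : p = n * h + 1)
include hph

lemma exists_mem_span_coe_eq_of_mem_periodRing {x : ℂ}
    (hx : x ∈ periodRing (zetaChar p) ((g : ZMod p) ^ n)) :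
    ∃ y ∈ Submodule.span ℤ (Set.range η), (y : ℂ) = x := by
  let f : Zf n p h g →ₗ[ℤ] ℂ := (algebraMap (Zf n p h g) ℂ).toAddMonoidHom.toIntLinearMap
  have hrange : f ∘ η = addCharPeriod (zetaChar p) (g : ZMod p) n h :=
    funext fun s => (hη s).trans (gaussPeriod_eq_addCharPeriod s)
  have hmem := mem_span_addCharPeriod_of_mem_periodRing ((ZMod.card p).trans hph) hg
    isPrimitive_zetaChar hx
  rwa [← hrange, Set.range_comp, ← Submodule.map_span] at hmem

lemma mem_span_of_mem_periodOrder {x : Zf n p h g} (hx : x ∈ periodOrder n p h g) :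
    x ∈ Submodule.span ℤ (Set.range η) := by
  obtain ⟨y, hy, hyx⟩ := exists_mem_span_coe_eq_of_mem_periodRing hg hη hph hx
  rwa [← Subtype.ext hyx]

lemma sum_eq_neg_one_of_coe_eq_gaussPeriod : ∑ s ∈ range n, η s = -1 := by
  apply (algebraMap (Zf n p h g) ℂ).injective
  simpa [hη, gaussPeriod_eq_addCharPeriod] using
    sum_addCharPeriod hg ((ZMod.card p).trans hph) isPrimitive_zetaChar

lemma sum_mul_sub_eq_of_coe_eq_gaussPeriod (hn : Odd n) {j : ℕ} (hj0 : j ≠ 0) (hj : j < n) :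
    ∑ s ∈ range n, η s * (η s - η (s + j)) = p := by
  apply (algebraMap (Zf n p h g) ℂ).injective
  simpa [hη, gaussPeriod_eq_addCharPeriod] using
    sum_addCharPeriod_mul_sub hg ((ZMod.card p).trans hph) isPrimitive_zetaChar hn hj0 hj

lemma exists_mem_periodOrder_mul_eq {β : Zf n p h g}
    (hβ : (β : ℂ) = ∏ r ∈ range h, (1 - zetaC p ^ g ^ (n * r))) :
    ∃ γ ∈ periodOrder n p h g, β * γ = p := by
  obtain ⟨γ, hγ, hβγ⟩ := exists_mem_periodRing_prod_one_sub_mul_eq (ψ := zetaChar p)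
    ((ZMod.card p).trans hph) hg
  obtain ⟨γ, _, rfl⟩ := exists_mem_span_coe_eq_of_mem_periodRing hg hη hph hγ
  refine ⟨γ, hγ, Subtype.ext ?_⟩
  have hprod := prod_compl_zero_one_sub_zmodChar (isPrimitiveRoot_zetaC (NeZero.ne p))
  rw [← zetaChar] at hprod
  simpa [hβ, ← zetaChar_natCast, hprod] using hβγ

end Conjugates

end PeriodField

section CyclicAlgebra

variable {n p h g σ : ℕ}

lemma Um_mulVec_single_castSucc {m : ℕ} (j : Fin m) :
    (Um (m + 1) p h g σ).mulVec (Pi.single j.castSucc 1) = Pi.single j.succ 1 := by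
  ext i
  have hj := j.2
  simp only [Matrix.mulVec_single_one, Matrix.col_apply, Um, Matrix.of_apply, Pi.single_apply,
    Fin.ext_iff, Fin.val_castSucc, Fin.val_succ]
  split_ifs <;> first | rfl | omega

lemma Um_mulVec_single_last (m : ℕ) :
    (Um (m + 1) p h g σ).mulVec (Pi.single (Fin.last m) 1) =
      (σ : Zf (m + 1) p h g) • Pi.single 0 1 := by
  ext i
  have hi : (i : ℕ) ≠ m + 1 := i.2.ne
  simp [Um, Pi.single_apply, hi]

lemma Um_pow_mulVec_single_zero {m : ℕ} (j : Fin (m + 1)) :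
    (Um (m + 1) p h g σ ^ (j : ℕ)).mulVec (Pi.single 0 1) = Pi.single j 1 := by
  induction j using Fin.induction with
  | zero => rw [Fin.val_zero, pow_zero, Matrix.one_mulVec]
  | succ j ih =>
    rw [Fin.val_succ, pow_succ', ← Matrix.mulVec_mulVec, ← Fin.val_castSucc, ih,
      Um_mulVec_single_castSucc]

lemma Um_pow (m : ℕ) :
    Um (m + 1) p h g σ ^ (m + 1) = (σ : Matrix _ _ (Zf (m + 1) p h g)) := by
  have hzero : (Um (m + 1) p h g σ ^ (m + 1)).mulVec (Pi.single 0 1) =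
      (σ : Zf (m + 1) p h g) • Pi.single 0 1 := by
    have hpow := Um_pow_mulVec_single_zero (p := p) (h := h) (g := g) (σ := σ) (Fin.last m)
    rw [Fin.val_last] at hpow
    rw [pow_succ', ← Matrix.mulVec_mulVec, hpow, Um_mulVec_single_last]
  refine Matrix.ext_of_mulVec_single fun j => ?_
  rw [← Um_pow_mulVec_single_zero (p := p) (h := h) (g := g) (σ := σ) j, Matrix.mulVec_mulVec,
    (Commute.pow_pow_self _ _ _).eq, ← Matrix.mulVec_mulVec, hzero, Matrix.mulVec_smul,
    Matrix.natCast_mulVec]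

variable {S : Zf n p h g ≃ₐ[ℚ] Zf n p h g}

lemma Dm_mul_Um {z : Zf n p h g} (hz : (S ^ n) z = z) :
    Dm n p h g S z * Um n p h g σ = Um n p h g σ * Dm n p h g S (S z) := by
  ext1 i j
  rw [Dm, Dm, Matrix.diagonal_mul, Matrix.mul_diagonal, ← AlgEquiv.mul_apply, ← pow_succ]
  simp only [Um, Matrix.of_apply]
  split_ifs with hsucc hcorner
  · rw [hsucc, mul_one, one_mul]
  · have hlast : (j : ℕ) + 1 = n := by omega
    rw [hlast, hz, hcorner.1, pow_zero, AlgEquiv.one_apply, mul_comm]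
  · rw [mul_zero, zero_mul]

/-- `D` as a ring homomorphism `Z →+* M_n(Z)`. -/
def DmHom (S : Zf n p h g ≃ₐ[ℚ] Zf n p h g) :
    Zf n p h g →+* Matrix (Fin n) (Fin n) (Zf n p h g) :=
  (Matrix.diagonalRingHom (Fin n) (Zf n p h g)).comp
    (RingHom.pi fun i : Fin n => RingHomClass.toRingHom (S ^ (i : ℕ)))

lemma DmHom_apply (z : Zf n p h g) : DmHom S z = Dm n p h g S z := rfl

lemma Dm_pow_apply_mul_Um (hS : Function.Periodic (fun s => (S ^ s) (etaZ n p h g)) n) (s : ℕ) :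
    Dm n p h g S ((S ^ s) (etaZ n p h g)) * Um n p h g σ =
      Um n p h g σ * Dm n p h g S ((S ^ (s + 1)) (etaZ n p h g)) := by
  have hfix : (S ^ n) ((S ^ s) (etaZ n p h g)) = (S ^ s) (etaZ n p h g) := by
    rw [← AlgEquiv.mul_apply, ← pow_add, add_comm]
    exact hS s
  rw [Dm_mul_Um hfix, ← AlgEquiv.mul_apply, ← pow_succ']

lemma Iorder_eq_cyclicOrder {m : ℕ} {S : Zf (m + 1) p h g ≃ₐ[ℚ] Zf (m + 1) p h g}
    (hS : Function.Periodic (fun s => (S ^ s) (etaZ (m + 1) p h g)) (m + 1)) (lam : ℤ)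
    (β : Zf (m + 1) p h g) :
    Iorder (m + 1) p h g σ lam S β =
      cyclicOrder (Ym (m + 1) p h g σ lam S β)
        (fun s => DmHom S ((S ^ s) (etaZ (m + 1) p h g))) m := by
  ext x
  exact (mem_cyclicOrder_iff_exists_sum (hS.comp (DmHom S))).symm

lemma natCast_mul_Ym (hp : p ≠ 0) (lam : ℤ) (β : Zf n p h g) :
    p * Ym n p h g σ lam S β = (lam - Um n p h g σ) * DmHom S (β ^ (n - 1)) := by
  have hp0 : (p : Zf n p h g) ≠ 0 := Nat.cast_ne_zero.mpr hp
  rw [← nsmul_eq_mul, ← Nat.cast_smul_eq_nsmul (Zf n p h g), Ym, smul_inv_smul₀ hp0,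
    Int.cast_smul_eq_zsmul, zsmul_one, DmHom_apply]

lemma odd_of_prime_of_eq_mul_add_one (hp : p.Prime) (hn1 : n ≠ 1) (hph : p = n * h + 1) :
    Odd p := by
  refine hp.odd_of_ne_two fun hp2 => hn1 (Nat.eq_one_of_mul_eq_one_right (n := h) ?_)
  omega

end CyclicAlgebra

theorem matrices_over_maximal_order_sum_of_squares_general
    (n p h g σ : ℕ) (lam : ℤ)
    (hn1 : n ≠ 1) (hnodd : Odd n)
    (hp : p.Prime)
    (hph : p = n * h + 1)
    (hg : orderOf (g : ZMod p) = p - 1)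
    (S : Zf n p h g ≃ₐ[ℚ] Zf n p h g)
    (hS : ∀ s : ℕ, (((S ^ s) (etaZ n p h g) : Zf n p h g) : ℂ) = gaussPeriod n p h g s)
    (β : Zf n p h g)
    (hβ : (β : ℂ) = ∏ r ∈ Finset.range h, (1 - zetaC p ^ (g ^ (n * r))))
    (hσodd : Odd σ) {ι : Type*} [Fintype ι] [DecidableEq ι] [Nontrivial ι]
    (C : Matrix ι ι (Matrix (Fin n) (Fin n) (Zf n p h g)))
    (hC : ∀ i j, C i j ∈ Iorder n p h g σ lam S β) :
    ∃ (m : ℕ) (A : Fin m → Matrix ι ι (Matrix (Fin n) (Fin n) (Zf n p h g))),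
      (∀ t i j, A t i j ∈ Iorder n p h g σ lam S β) ∧ C = ∑ t, A t ^ 2 := by
  have := Fact.mk hp
  have hpodd := odd_of_prime_of_eq_mul_add_one hp hn1 hph
  obtain ⟨m, rfl⟩ := Nat.exists_eq_succ_of_ne_zero hnodd.pos.ne'
  replace hg : orderOf (g : ZMod p) = (m + 1) * h := hg.trans (Nat.sub_eq_of_eq_add hph)
  have hperiodic := periodic_of_coe_eq_gaussPeriod hg hS
  obtain ⟨γ, hγ, hβγ⟩ := exists_mem_periodOrder_mul_eq hg hS hph hβ
  have hαγ : β ^ m * γ ^ m = (p ^ m : ℕ) := by rw [← mul_pow, hβγ, Nat.cast_pow]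
  simp only [Iorder_eq_cyclicOrder hperiodic, SetLike.mem_coe] at hC ⊢
  exact exists_eq_sum_sq_of_mem_matrixSumSq <| mem_matrixSumSq_cyclicOrder
    (mem_periodOrder_of_coe_eq_gaussPeriod hg hS) (fun x => mem_span_of_mem_periodOrder hg hS hph)
    (Dm_pow_apply_mul_Um hperiodic) hpodd hσodd (by simpa using hn1) hnodd (Um_pow m)
    (sum_eq_neg_one_of_coe_eq_gaussPeriod hg hS hph)
    (fun _ => sum_mul_sub_eq_of_coe_eq_gaussPeriod hg hS hph hnodd)
    hpodd.pow (pow_mem (mem_periodOrder_of_coe_eq_prod hg hβ) m) (pow_mem hγ m) hαγ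
    (natCast_mul_Ym hp.ne_zero lam β) hC

/-- If `σ ≡ 1 (mod 2)` and `N_{Z/ℚ}(η) ≡ 1 (mod 2)`, then for every
`k ≥ 2` every `k × k` matrix with entries in the maximal order `𝔪 = I(λ)` is a sum of
squares of `k × k` matrices with entries in `𝔪`. -/
theorem matrices_over_maximal_order_sum_of_squares
    (n p h g σ : ℕ) (lam : ℤ)
    (hn : n.Prime) (hnodd : Odd n)
    (hp : p.Prime)
    (hph : p = n * h + 1)
    (hg : orderOf (g : ZMod p) = p - 1)
    (hσfac : ∃ qs : Finset ℕ, 2 ≤ qs.card ∧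
      (∀ q ∈ qs, q.Prime ∧ ¬ ∃ x : ZMod p, x ^ n = (q : ZMod p)) ∧ σ = ∏ q ∈ qs, q)
    (hσres : ∃ x : ZMod p, x ^ n = (σ : ZMod p))
    (hσcop : Nat.Coprime σ p)
    (hlam : (lam : ZMod p) ^ n = (σ : ZMod p))
    (S : Zf n p h g ≃ₐ[ℚ] Zf n p h g)
    (hS : ∀ s : ℕ, (((S ^ s) (etaZ n p h g) : Zf n p h g) : ℂ) = gaussPeriod n p h g s)
    (β : Zf n p h g)
    (hβ : (β : ℂ) = ∏ r ∈ Finset.range h, (1 - zetaC p ^ (g ^ (n * r))))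
    (hσodd : σ % 2 = 1)
    (hnorm : ∃ N : ℤ, Odd N ∧ Algebra.norm ℚ (etaZ n p h g) = (N : ℚ))
    (k : ℕ) (hk : 2 ≤ k)
    (C : Matrix (Fin k) (Fin k) (Matrix (Fin n) (Fin n) (Zf n p h g)))
    (hC : ∀ i j, C i j ∈ Iorder n p h g σ lam S β) :
    ∃ (m : ℕ) (A : Fin m → Matrix (Fin k) (Fin k) (Matrix (Fin n) (Fin n) (Zf n p h g))),
      (∀ t i j, A t i j ∈ Iorder n p h g σ lam S β) ∧ C = ∑ t, A t ^ 2 := by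
  have := Fin.nontrivial_iff_two_le.mpr hk
  exact matrices_over_maximal_order_sum_of_squares_general n p h g σ lam hn.ne_one hnodd hp hph hg S
    hS β hβ (Nat.odd_iff.mpr hσodd) C hC

end
end
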